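/- Let 𝕄 = ⟨M, 𝒞⟩ be a countable transitive model of GB⁻. If ℙ is a notion of class forcing for 𝕄 that is approachable by projections, then ℙ satisfies the forcing theorem over 𝕄. -/

import Mathlib

noncomputable section

namespace CF

attribute [local instance] Classical.propDecidable

/-! ### First-order formulas of the language of set theory -/

/-- First-order `∈`-formulas with variables indexed by `ℕ`. -/
inductive EFormula : Type
  | mem : ℕ → ℕ → EFormula
  | eq : ℕ → ℕ → EFormula
  | not : EFormula → EFormula
  | or : EFormula → EFormula → EFormula
  | ex : ℕ → EFormula → EFormula

/-- Satisfaction of an `∈`-formula in the structure `⟨D, ∈⟩` under assignment `v`. -/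
def EFormula.Sat (D : Set ZFSet) (v : ℕ → ZFSet) : EFormula → Prop
  | .mem i j => v i ∈ v j
  | .eq i j => v i = v j
  | .not φ => ¬ EFormula.Sat D v φ
  | .or φ ψ => EFormula.Sat D v φ ∨ EFormula.Sat D v ψ
  | .ex i φ => ∃ x ∈ D, EFormula.Sat D (Function.update v i x) φ

/-- All variables occurring in the formula are `< m`. -/
def EFormula.VarsLt (m : ℕ) : EFormula → Prop
  | .mem i j => i < m ∧ j < m
  | .eq i j => i < m ∧ j < m
  | .not φ => EFormula.VarsLt m φ
  | .or φ ψ => EFormula.VarsLt m φ ∧ EFormula.VarsLt m ψ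
  | .ex i φ => i < m ∧ EFormula.VarsLt m φ

/-- First-order formulas of the two-sorted language of `GB⁻`: set variables indexed by `ℕ`,
class parameters indexed by `ℕ`, and only set quantifiers. -/
inductive GBFormula : Type
  | mem : ℕ → ℕ → GBFormula
  | eq : ℕ → ℕ → GBFormula
  | cls : ℕ → ℕ → GBFormula    -- `vᵢ ∈ C_j`
  | not : GBFormula → GBFormula
  | or : GBFormula → GBFormula → GBFormula
  | ex : ℕ → GBFormula → GBFormula

/-- Satisfaction of a `GBFormula` with set quantifiers ranging over `Mset`,
class parameters `Cs` and set assignment `v`. -/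
def GBFormula.Sat (Mset : Set ZFSet) (Cs : ℕ → Set ZFSet) (v : ℕ → ZFSet) : GBFormula → Prop
  | .mem i j => v i ∈ v j
  | .eq i j => v i = v j
  | .cls i j => v i ∈ Cs j
  | .not φ => ¬ GBFormula.Sat Mset Cs v φ
  | .or φ ψ => GBFormula.Sat Mset Cs v φ ∨ GBFormula.Sat Mset Cs v ψ
  | .ex i φ => ∃ x ∈ Mset, GBFormula.Sat Mset Cs (Function.update v i x) φ

/-! ### Countable transitive models of GB⁻ -/

/-- A countable transitive second-order model `𝕄 = ⟨M, 𝒞⟩` of `GB⁻`: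
`M` is transitive and countable, classes are subsets of `M`, sets are classes, and the axioms
of `GB⁻` hold (extensionality and foundation are automatic for `ZFSet`; the set axioms of `ZF⁻`
with separation and collection allowing class parameters, together with first-order class
comprehension, are listed). -/
structure GBModel.{u} where
  M : Set ZFSet.{u}
  Cls : Set (Set ZFSet)
  countable_M : M.Countable
  countable_Cls : Cls.Countable
  transitive : ∀ x ∈ M, ∀ y : ZFSet, y ∈ x → y ∈ M
  sets_are_classes : ∀ x ∈ M, x.toSet ∈ Cls
  classes_sub : ∀ C ∈ Cls, C ⊆ M
  empty_mem : (∅ : ZFSet) ∈ M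
  pair_mem : ∀ x ∈ M, ∀ y ∈ M, ({x, y} : ZFSet) ∈ M
  sUnion_mem : ∀ x ∈ M, (ZFSet.sUnion x : ZFSet) ∈ M
  omega_mem : ZFSet.omega ∈ M
  comprehension : ∀ (φ : GBFormula) (v : ℕ → ZFSet) (Cs : ℕ → Set ZFSet),
    (∀ n, v n ∈ M) → (∀ n, Cs n ∈ Cls) →
    {x : ZFSet | x ∈ M ∧ GBFormula.Sat M Cs (Function.update v 0 x) φ} ∈ Cls
  separation : ∀ C ∈ Cls, ∀ a ∈ M, ∃ b ∈ M, ∀ x : ZFSet, x ∈ b ↔ x ∈ a ∧ x ∈ C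
  collection : ∀ C ∈ Cls, ∀ a ∈ M,
    (∀ x : ZFSet, x ∈ a → ∃ y ∈ M, x.pair y ∈ C) →
    ∃ b ∈ M, ∀ x : ZFSet, x ∈ a → ∃ y : ZFSet, y ∈ b ∧ x.pair y ∈ C

/-- A notion of class forcing `ℙ = ⟨P, ≤_ℙ⟩` for `𝕄`: a partial order (with maximal element
`𝟙_ℙ`) whose domain and order relation are classes of `𝕄`. -/
structure ClassForcing (𝕄 : GBModel) where
  P : Set ZFSet
  le : ZFSet → ZFSet → Prop
  one : ZFSet
  one_mem : one ∈ P
  le_one : ∀ p ∈ P, le p one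
  le_refl : ∀ p ∈ P, le p p
  le_trans : ∀ p q r : ZFSet, le p q → le q r → le p r
  P_cls : P ∈ 𝕄.Cls
  le_cls : {x : ZFSet | ∃ p ∈ P, ∃ q ∈ P, le p q ∧ x = p.pair q} ∈ 𝕄.Cls

/-! ### Names and their evaluation -/

/-- Auxiliary rank-bounded version of `IsName`. -/
def IsNameAux (S : Set ZFSet) (o : Ordinal) (σ : ZFSet) : Prop :=
  ∀ x ∈ σ.toSet, ∃ τ p : ZFSet, x = τ.pair p ∧ p ∈ S ∧
    ∃ _h : τ.rank < o, IsNameAux S τ.rank τ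
termination_by o

/-- `σ` is a `ℙ`-name (for the forcing with conditions `S`): every element of `σ` is a pair
`⟨τ, p⟩` with `τ` a `ℙ`-name and `p ∈ S`. -/
def IsName (S : Set ZFSet) (σ : ZFSet) : Prop := IsNameAux S σ.rank σ

/-- Image of a ZFSet under an arbitrary function (using choice for definability). -/
def zimage (f : ZFSet → ZFSet) (x : ZFSet) : ZFSet :=
  @ZFSet.image f (Classical.allZFSetDefinable _) x

/-- Auxiliary rank-bounded version of the evaluation `σ^G` of a name by a filter. -/
def nameEvalAux (G : Set ZFSet) (o : Ordinal) (σ : ZFSet) : ZFSet :=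
  zimage (fun τ => if h : τ.rank < o then nameEvalAux G τ.rank τ else ∅)
    (ZFSet.sep (fun τ => ∃ p, p ∈ G ∧ τ.pair p ∈ σ) (ZFSet.sUnion (ZFSet.sUnion σ)))
termination_by o
decreasing_by exact h

/-- The evaluation `σ^G = {τ^G | ∃ p ∈ G, ⟨τ, p⟩ ∈ σ}` of a name `σ` by a filter `G`. -/
def nameEval (G : Set ZFSet) (σ : ZFSet) : ZFSet := nameEvalAux G σ.rank σ

/-- Auxiliary rank-bounded version of `nameTC`. -/
def nameTCAux (o : Ordinal) (σ : ZFSet) : Set ZFSet :=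
  {x | ∃ τ p : ZFSet, τ.pair p ∈ σ ∧ (x = p ∨ ∃ _h : τ.rank < o, x ∈ nameTCAux τ.rank τ)}
termination_by o

/-- The set `tc(σ) = ⋃ {{p} ∪ tc(τ) | ⟨τ,p⟩ ∈ σ}` of conditions appearing in the transitive
closure of the name `σ`. -/
def nameTC (σ : ZFSet) : Set ZFSet := nameTCAux σ.rank σ

/-! ### Filters, genericity, generic extensions -/

/-- `G` is a filter on the partial order with domain `S` and ordering `le`. -/
def IsFilterOn (S : Set ZFSet) (le : ZFSet → ZFSet → Prop) (G : Set ZFSet) : Prop :=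
  G ⊆ S ∧ G.Nonempty ∧ (∀ p ∈ G, ∀ q ∈ S, le p q → q ∈ G) ∧
    ∀ p ∈ G, ∀ q ∈ G, ∃ r ∈ G, le r p ∧ le r q

/-- `D` is a dense subclass of the partial order `⟨S, le⟩`. -/
def DenseIn (S : Set ZFSet) (le : ZFSet → ZFSet → Prop) (D : Set ZFSet) : Prop :=
  D ⊆ S ∧ ∀ p ∈ S, ∃ q ∈ D, le q p

/-- `G` is a generic filter on `⟨S, le⟩` over `𝕄`: a filter meeting every dense subclass
of `⟨S, le⟩` lying in `𝒞`. -/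
def IsGeneric (𝕄 : GBModel) (S : Set ZFSet) (le : ZFSet → ZFSet → Prop) (G : Set ZFSet) : Prop :=
  IsFilterOn S le G ∧ ∀ D ∈ 𝕄.Cls, DenseIn S le D → (G ∩ D).Nonempty

/-- The generic extension `M[G] = {σ^G | σ ∈ M a name for the forcing with domain S}`. -/
def MGen (𝕄 : GBModel) (S : Set ZFSet) (G : Set ZFSet) : Set ZFSet :=
  {x | ∃ σ : ZFSet, σ ∈ 𝕄.M ∧ IsName S σ ∧ nameEval G σ = x}

/-! ### Compatibility, the set decision property -/

/-- `p` and `q` are compatible in `⟨S, le⟩`. -/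
def Compat (S : Set ZFSet) (le : ZFSet → ZFSet → Prop) (p q : ZFSet) : Prop :=
  ∃ r ∈ S, le r p ∧ le r q

/-- `p ≤* q` : every extension of `p` is compatible with `q`. -/
def leStar (S : Set ZFSet) (le : ZFSet → ZFSet → Prop) (p q : ZFSet) : Prop :=
  ∀ r ∈ S, le r p → Compat S le r q

/-- `p` decides the set of conditions `A`: for every `a ∈ A`, either `p ≤* a` or `p ⊥ a`. -/
def Decides (S : Set ZFSet) (le : ZFSet → ZFSet → Prop) (p A : ZFSet) : Prop :=
  ∀ a : ZFSet, a ∈ A → leStar S le p a ∨ ¬ Compat S le p a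

/-- The set decision property: every set of conditions in `M` is decided densely. -/
def SetDecisionProperty (𝕄 : GBModel) (F : ClassForcing 𝕄) : Prop :=
  ∀ p ∈ F.P, ∀ A : ZFSet, A ∈ 𝕄.M → (∀ a : ZFSet, a ∈ A → a ∈ F.P) →
    ∃ q ∈ F.P, F.le q p ∧ Decides F.P F.le q A

/-! ### The forcing theorem -/

/-- Encode a finite list of sets as a single set by iterated Kuratowski pairing. -/
def listEncode : List ZFSet → ZFSet
  | [] => ∅
  | a :: l => a.pair (listEncode l)

/-- The assignment sending variable `n < m` to `σₙ^G` (and `∅` beyond `m`). -/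
def namesAssign (G : Set ZFSet) (m : ℕ) (σs : Fin m → ZFSet) : ℕ → ZFSet :=
  fun n => if h : n < m then nameEval G (σs ⟨n, h⟩) else ∅

/-- `p ⊩_ℙ φ(σ₀, …, σ_{m-1})` : for every generic `G ∋ p`, `M[G] ⊨ φ(σ₀^G, …, σ_{m-1}^G)`. -/
def Forces (𝕄 : GBModel) (F : ClassForcing 𝕄) (φ : EFormula) (m : ℕ) (p : ZFSet)
    (σs : Fin m → ZFSet) : Prop :=
  ∀ G : Set ZFSet, IsGeneric 𝕄 F.P F.le G → p ∈ G →
    EFormula.Sat (MGen 𝕄 F.P G) (namesAssign G m σs) φ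

/-- `ℙ` satisfies the forcing theorem over `𝕄`: for every `∈`-formula `φ(v₀,…,v_{m-1})`,
the forcing relation is a class of `𝕄` (definability lemma) and everything true in a generic
extension is forced by a condition in the generic filter (truth lemma). -/
def SatisfiesForcingTheorem (𝕄 : GBModel) (F : ClassForcing 𝕄) : Prop :=
  ∀ (φ : EFormula) (m : ℕ), EFormula.VarsLt m φ →
    ({x : ZFSet | ∃ p ∈ F.P, ∃ σs : Fin m → ZFSet,
        (∀ i, σs i ∈ 𝕄.M ∧ IsName F.P (σs i)) ∧
        Forces 𝕄 F φ m p σs ∧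
        x = p.pair (listEncode (List.ofFn σs))} ∈ 𝕄.Cls) ∧
    ∀ σs : Fin m → ZFSet, (∀ i, σs i ∈ 𝕄.M ∧ IsName F.P (σs i)) →
      ∀ G : Set ZFSet, IsGeneric 𝕄 F.P F.le G →
        EFormula.Sat (MGen 𝕄 F.P G) (namesAssign G m σs) φ →
        ∃ p ∈ G, Forces 𝕄 F φ m p σs

/-! ### Complete subforcings, the set reduction property -/

/-- `A` is an antichain of the partial order `⟨S, le⟩`. -/
def IsAntichainIn (S : Set ZFSet) (le : ZFSet → ZFSet → Prop) (A : Set ZFSet) : Prop :=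
  A ⊆ S ∧ ∀ p ∈ A, ∀ q ∈ A, p ≠ q → ¬ Compat S le p q

/-- `A` is a maximal antichain of the partial order `⟨S, le⟩`. -/
def IsMaxAntichainIn (S : Set ZFSet) (le : ZFSet → ZFSet → Prop) (A : Set ZFSet) : Prop :=
  IsAntichainIn S le A ∧ ∀ p ∈ S, ∃ a ∈ A, Compat S le p a

/-- `ℚ ⊲∘ ℙ` : `Q` is a set-sized complete subforcing of `ℙ` (with the induced ordering):
`Q ∈ M`, `Q ⊆ P`, `𝟙 ∈ Q`, and every maximal antichain of `ℚ` in `M` is predense in `ℙ`. -/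
def IsCompleteSub (𝕄 : GBModel) (F : ClassForcing 𝕄) (Q : ZFSet) : Prop :=
  Q ∈ 𝕄.M ∧ Q.toSet ⊆ F.P ∧ F.one ∈ Q ∧
    ∀ A : ZFSet, A ∈ 𝕄.M → A.toSet ⊆ Q.toSet → IsMaxAntichainIn Q.toSet F.le A.toSet →
      ∀ p ∈ F.P, ∃ a : ZFSet, a ∈ A ∧ Compat F.P F.le p a

/-- `ℚ^{∥q}` : the conditions of `Q` compatible with `q` in `ℙ`. -/
def QPar (𝕄 : GBModel) (F : ClassForcing 𝕄) (Q : ZFSet) (q : ZFSet) : Set ZFSet :=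
  {r | r ∈ Q ∧ Compat F.P F.le r q}

/-- The property `(*)(A, q, ℚ)`: for every `a ∈ A`, the set of `r ∈ ℚ^{∥q}` such that either
all `s ≤ q, r` satisfy `s ≤* a`, or all `s ≤ q, r` satisfy `s ⊥ a`, is dense in `ℚ^{∥q}`. -/
def StarProp (𝕄 : GBModel) (F : ClassForcing 𝕄) (A q Q : ZFSet) : Prop :=
  ∀ a : ZFSet, a ∈ A → ∀ r₀ ∈ QPar 𝕄 F Q q, ∃ r₁ ∈ QPar 𝕄 F Q q, F.le r₁ r₀ ∧
    ((∀ s ∈ F.P, F.le s q → F.le s r₁ → leStar F.P F.le s a) ∨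
      (∀ s ∈ F.P, F.le s q → F.le s r₁ → ¬ Compat F.P F.le s a))

/-- The set reduction property. -/
def SetReductionProperty (𝕄 : GBModel) (F : ClassForcing 𝕄) : Prop :=
  ∀ A : ZFSet, A ∈ 𝕄.M → (∀ a : ZFSet, a ∈ A → a ∈ F.P) →
    ∀ p ∈ F.P, ∃ q ∈ F.P, F.le q p ∧ ∃ Q : ZFSet, IsCompleteSub 𝕄 F Q ∧ StarProp 𝕄 F A q Q

/-- Every new set added by `ℙ` is added by a set-sized complete subforcing of `ℙ`. -/
def EveryNewSetBySub (𝕄 : GBModel) (F : ClassForcing 𝕄) : Prop :=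
  ∀ G : Set ZFSet, IsGeneric 𝕄 F.P F.le G →
    ∀ x : ZFSet, x ∈ MGen 𝕄 F.P G → x ∉ 𝕄.M →
      ∃ Q : ZFSet, IsCompleteSub 𝕄 F Q ∧ x ∈ MGen 𝕄 Q.toSet (G ∩ Q.toSet)

/-! ### The q-reduction of a name -/

/-- First component of a Kuratowski pair (junk value `∅` otherwise). -/
def fstZ (x : ZFSet) : ZFSet :=
  if h : ∃ a b : ZFSet, x = a.pair b then h.choose else ∅

/-- Second component of a Kuratowski pair (junk value `∅` otherwise). -/
def sndZ (x : ZFSet) : ZFSet :=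
  if h : ∃ a b : ZFSet, x = a.pair b then h.choose_spec.choose else ∅

/-- Cartesian product of two `ZFSet`s. -/
def zprod (a b : ZFSet) : ZFSet :=
  ZFSet.sep (fun x => ∃ u v : ZFSet, u ∈ a ∧ v ∈ b ∧ x = u.pair v)
    (ZFSet.powerset (ZFSet.powerset (a ∪ b)))

/-- Auxiliary rank-bounded version of the `q`-reduction of a name to `Q`. -/
def reduceAux (S : Set ZFSet) (le : ZFSet → ZFSet → Prop) (Q q : ZFSet) (o : Ordinal)
    (σ : ZFSet) : ZFSet :=
  zimage
    (fun x =>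
      (if h : (fstZ x).rank < o then reduceAux S le Q q (fstZ x).rank (fstZ x) else ∅).pair
        (sndZ x))
    (ZFSet.sep
      (fun x => ∃ τ r : ZFSet, x = τ.pair r ∧ r ∈ Q ∧
        ∃ a : ZFSet, τ.pair a ∈ σ ∧ ∀ s ∈ S, le s q → le s r → leStar S le s a)
      (zprod (ZFSet.sUnion (ZFSet.sUnion σ)) Q))
termination_by o
decreasing_by exact h

/-- The `q`-reduction `σ_q^ℚ = {⟨τ_q^ℚ, r⟩ | r ∈ ℚ ∧ ∃a (⟨τ,a⟩ ∈ σ ∧ ∀ s ≤ q,r (s ≤* a))}`. -/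
def reduceName (S : Set ZFSet) (le : ZFSet → ZFSet → Prop) (Q q σ : ZFSet) : ZFSet :=
  reduceAux S le Q q σ.rank σ

/-! ### Projections -/

/-- `f` is a projection from `⟨S, le⟩` (with maximum `one`) onto the subforcing with domain
`Qs`, respecting `X`. -/
def IsProjectionResp (S : Set ZFSet) (le : ZFSet → ZFSet → Prop) (one : ZFSet)
    (Qs X : Set ZFSet) (f : ZFSet → ZFSet) : Prop :=
  (∀ p ∈ S, f p ∈ Qs) ∧
  f one = one ∧
  (∀ p ∈ S, ∀ q ∈ S, le p q → le (f p) (f q)) ∧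
  (∀ p ∈ S, ∀ q ∈ Qs, le q (f p) → ∃ r ∈ S, le r p ∧ le (f r) q) ∧
  (∀ p ∈ X, ∀ q ∈ S, le (f q) p → le q p) ∧
  (∀ p ∈ X, f p = p)

/-- `ℙ` is approachable by projections: there is a class `Π ∈ 𝒞` whose sections `π_{X,y}`
are such that for every set `X ⊆ ℙ` there are a set `y` and a set-sized subforcing `ℚ ⊇ X ∪ {𝟙}`
of `ℙ` with `π_{X,y} : ℙ → ℚ` a projection respecting `X`. -/
def ApproachableByProjections (𝕄 : GBModel) (F : ClassForcing 𝕄) : Prop :=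
  ∃ Pi ∈ 𝕄.Cls, ∀ X : ZFSet, X ∈ 𝕄.M → (∀ x : ZFSet, x ∈ X → x ∈ F.P) →
    ∃ y ∈ 𝕄.M, ∃ Q : ZFSet, Q ∈ 𝕄.M ∧ Q.toSet ⊆ F.P ∧ (∀ x : ZFSet, x ∈ X → x ∈ Q) ∧
      F.one ∈ Q ∧ ∃ f : ZFSet → ZFSet,
        (∀ u ∈ F.P, ∀ v : ZFSet, (f u = v ↔ X.pair (y.pair (u.pair v)) ∈ Pi)) ∧
        IsProjectionResp F.P F.le F.one Q.toSet X.toSet f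

/-- `p ⊩ σ ⊆ τ` for the forcing with domain `S` and ordering `le`. -/
def ForcesSubset (𝕄 : GBModel) (S : Set ZFSet) (le : ZFSet → ZFSet → Prop)
    (p σ τ : ZFSet) : Prop :=
  ∀ G : Set ZFSet, IsGeneric 𝕄 S le G → p ∈ G → nameEval G σ ⊆ nameEval G τ

/-! ### Bounded names, turning proper classes into sets -/

/-- The possible values of the name `σ` in generic extensions. -/
def PossibleValues (𝕄 : GBModel) (S : Set ZFSet) (le : ZFSet → ZFSet → Prop)
    (σ : ZFSet) : Set ZFSet :=
  {x | ∃ G : Set ZFSet, IsGeneric 𝕄 S le G ∧ nameEval G σ = x}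

/-- The name `σ` is bounded: some `A ∈ M` covers all its possible values lying in `M`. -/
def IsBoundedName (𝕄 : GBModel) (F : ClassForcing 𝕄) (σ : ZFSet) : Prop :=
  ∃ A ∈ 𝕄.M, PossibleValues 𝕄 F.P F.le σ ∩ 𝕄.M ⊆ A.toSet

/-- `ℙ` has bounded names: every `ℙ`-name in `M` is bounded. -/
def HasBoundedNames (𝕄 : GBModel) (F : ClassForcing 𝕄) : Prop :=
  ∀ σ : ZFSet, σ ∈ 𝕄.M → IsName F.P σ → IsBoundedName 𝕄 F σ

/-- `X` is a proper class of `𝕄`: a class of `𝕄` that is not (the extension of) a set of `𝕄`. -/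
def IsProperClass (𝕄 : GBModel) (X : Set ZFSet) : Prop :=
  X ∈ 𝕄.Cls ∧ ¬ ∃ x ∈ 𝕄.M, x.toSet = X

/-- The proper class `X` of `𝕄` is turned into a set by forcing with `ℙ`: some `ℙ`-name in `M`
evaluates to `X` under some generic filter. -/
def TurnsIntoSet (𝕄 : GBModel) (F : ClassForcing 𝕄) (X : Set ZFSet) : Prop :=
  ∃ σ : ZFSet, σ ∈ 𝕄.M ∧ IsName F.P σ ∧
    ∃ G : Set ZFSet, IsGeneric 𝕄 F.P F.le G ∧ (nameEval G σ).toSet = X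

/-! ### Functions and partial functions as sets, collapse forcings -/

/-- `p` is a partial function from (a subset of) `γ` into the class `Y`. -/
def IsPFunOn (p γ : ZFSet) (Y : Set ZFSet) : Prop :=
  (∀ x : ZFSet, x ∈ p → ∃ a b : ZFSet, x = a.pair b ∧ a ∈ γ ∧ b ∈ Y) ∧
  ∀ a b b' : ZFSet, a.pair b ∈ p → a.pair b' ∈ p → b = b'

/-- The domain of a set of pairs. -/
def pdom (p : ZFSet) : Set ZFSet := {a | ∃ b : ZFSet, a.pair b ∈ p}

/-- `f` is (the graph of) an injective function from `X` into `Y`. -/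
def ZInjFun (f : ZFSet) (X Y : Set ZFSet) : Prop :=
  (∀ x : ZFSet, x ∈ f → ∃ a b : ZFSet, x = a.pair b ∧ a ∈ X ∧ b ∈ Y) ∧
  (∀ a b b' : ZFSet, a.pair b ∈ f → a.pair b' ∈ f → b = b') ∧
  (∀ a ∈ X, ∃ b : ZFSet, a.pair b ∈ f) ∧
  (∀ a a' b : ZFSet, a.pair b ∈ f → a'.pair b ∈ f → a = a')

/-- `D` has size less than the cardinality of `γ` in the sense of `M`:
no function of `M` injects `γ` into `D`. -/
def SmallerThan (𝕄 : GBModel) (γ : ZFSet) (D : Set ZFSet) : Prop :=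
  ¬ ∃ f ∈ 𝕄.M, ZInjFun f γ.toSet D

/-- Conditions of `Col(γ, Y)^M`: partial functions of `M` from `γ` to `Y` whose domain has
size less than the cardinality of `γ` in `M`. -/
def ColCond (𝕄 : GBModel) (γ : ZFSet) (Y : Set ZFSet) (p : ZFSet) : Prop :=
  p ∈ 𝕄.M ∧ IsPFunOn p γ Y ∧ SmallerThan 𝕄 γ (pdom p)

/-- Conditions of `Col₋*(γ, Y)^M`: those conditions of `Col(γ, Y)^M` whose domain is
an ordinal. -/
def ColStarCond (𝕄 : GBModel) (γ : ZFSet) (Y : Set ZFSet) (p : ZFSet) : Prop :=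
  ColCond 𝕄 γ Y p ∧ ∃ β : ZFSet, β.IsOrdinal ∧ pdom p = β.toSet

/-- `f` is (the graph of) a function with domain `I`. -/
def ZFuncOn (f I : ZFSet) : Prop :=
  (∀ x : ZFSet, x ∈ f → ∃ a b : ZFSet, x = a.pair b ∧ a ∈ I) ∧
  (∀ a b b' : ZFSet, a.pair b ∈ f → a.pair b' ∈ f → b = b') ∧
  (∀ a : ZFSet, a ∈ I → ∃ b : ZFSet, a.pair b ∈ f)

/-- Application of a set-function to an argument (junk value `∅` if undefined). -/
def zapp (f i : ZFSet) : ZFSet :=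
  if h : ∃ b : ZFSet, i.pair b ∈ f then h.choose else ∅

/-! ### Pretameness -/

/-- `ℙ` is pretame for `𝕄`: for every `p ∈ ℙ`, `I ∈ M` and every `𝒞`-coded sequence
`⟨D_i | i ∈ I⟩` (coded as the class of pairs `⟨i, x⟩` with `x ∈ D_i`) of dense subclasses
of `ℙ`, there are `q ≤ p` and `⟨d_i | i ∈ I⟩ ∈ M` with `d_i ⊆ D_i` predense below `q`. -/
def Pretame (𝕄 : GBModel) (F : ClassForcing 𝕄) : Prop :=
  ∀ p ∈ F.P, ∀ I : ZFSet, I ∈ 𝕄.M → ∀ D ∈ 𝕄.Cls,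
    (∀ i : ZFSet, i ∈ I →
      (∀ x : ZFSet, i.pair x ∈ D → x ∈ F.P) ∧ ∀ r ∈ F.P, ∃ s : ZFSet, i.pair s ∈ D ∧ F.le s r) →
    ∃ q ∈ F.P, F.le q p ∧ ∃ d ∈ 𝕄.M, ZFuncOn d I ∧
      ∀ i : ZFSet, i ∈ I → (∀ x : ZFSet, x ∈ zapp d i → i.pair x ∈ D) ∧
        ∀ r ∈ F.P, F.le r q → ∃ a : ZFSet, a ∈ zapp d i ∧ Compat F.P F.le r a

/-! ### The specific forcings of Sections 6 and 7 -/

/-- Conditions of Definition 6.8: (not necessarily finite) partial functions from `ω` to `2`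
lying in `M`. -/
def PCond (𝕄 : GBModel) (p : ZFSet) : Prop :=
  p ∈ 𝕄.M ∧ IsPFunOn p ZFSet.omega {x : ZFSet | x = ∅ ∨ x = ({∅} : ZFSet)}

/-- Conditions of the finite support product `ℚ` of `ω` many copies of `ℙ`:
finite sequences `⟨p₀, …, p_k⟩` of `ℙ`-conditions. -/
def QCond (𝕄 : GBModel) (s : ZFSet) : Prop :=
  s ∈ 𝕄.M ∧ ∃ n : ZFSet, n ∈ ZFSet.omega ∧ ZFuncOn s n ∧
    ∀ i : ZFSet, i ∈ n → PCond 𝕄 (zapp s i)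

/-- The coordinatewise ordering on `ℚ`. -/
def QLe (s' s : ZFSet) : Prop :=
  pdom s ⊆ pdom s' ∧ ∀ i ∈ pdom s, zapp s i ⊆ zapp s' i

/-- The power class `𝒫(ω)^M`. -/
def PowOmega (𝕄 : GBModel) : Set ZFSet :=
  {x : ZFSet | x ∈ 𝕄.M ∧ x ⊆ ZFSet.omega}

/-- `X ⊆ M` is definable over `⟨M, ∈⟩` (from set parameters). -/
def DefinableOver (Mset : Set ZFSet) (X : Set ZFSet) : Prop :=
  ∃ (φ : EFormula) (v : ℕ → ZFSet), (∀ n, v n ∈ Mset) ∧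
    X = {x : ZFSet | x ∈ Mset ∧ EFormula.Sat Mset (Function.update v 0 x) φ}

/-- Every set of `M` is countable in `M`: it injects into `ω` by a function of `M`. -/
def AllSetsCountable (𝕄 : GBModel) : Prop :=
  ∀ x ∈ 𝕄.M, ∃ f ∈ 𝕄.M, ZInjFun f x.toSet ZFSet.omega.toSet

/-!
The relation `p ⊩ σ = τ` obeys a recursion on names. For a class forcing the values of this
recursion at a fixed pair of names need not form a set, so that the recursion need not have a
solution in `𝒞`. For a set forcing `ℚ` they do form a set, by separation and collection.
A projection `π` from `ℙ` to a set-sized `ℚ` which respects the conditions occurring in a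
transitive set `T` reduces the first case to the second: for names `σ, τ ∈ T`, the condition `p`
forces `σ = τ` for `ℙ` exactly if `π(p)` does for `ℚ`. Hence at every transitive set the recursion
for `ℙ` has a local solution, coded by a section of the class `Π` together with a set. Local
solutions agree wherever they apply, and therefore `p ⊩ σ = τ` is definable: it says that some
local solution holds at `p, σ, τ`. Given the definability of forced equality, the definability and
truth lemmas follow by induction on formulas, as for set forcing.
-/

universe u

/-! ### Definability over a model -/

/-- Renaming of the set variables by `f` and of the class parameters by `g`. -/
def GBFormula.rename (f g : ℕ → ℕ) : GBFormula → GBFormula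
  | .mem i j => .mem (f i) (f j)
  | .eq i j => .eq (f i) (f j)
  | .cls i j => .cls (f i) (g j)
  | .not φ => .not (φ.rename f g)
  | .or φ ψ => .or (φ.rename f g) (ψ.rename f g)
  | .ex i φ => .ex (f i) (φ.rename f g)

lemma GBFormula.sat_rename {D : Set ZFSet.{u}} {Cs : ℕ → Set ZFSet.{u}} {f g : ℕ → ℕ}
    (hf : f.Injective) (φ : GBFormula) (v : ℕ → ZFSet.{u}) :
    (φ.rename f g).Sat D Cs v ↔ φ.Sat D (Cs ∘ g) (v ∘ f) := by
  induction φ generalizing v with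
  | mem i j => exact Iff.rfl
  | eq i j => exact Iff.rfl
  | cls i j => exact Iff.rfl
  | not φ ih => exact not_congr (ih v)
  | or φ ψ ihφ ihψ => exact or_congr (ihφ v) (ihψ v)
  | ex i φ ih =>
    refine exists_congr fun x => and_congr_right fun _ => ?_
    rw [ih, Function.update_comp_eq_of_injective v hf]

/-- Predicates on assignments of elements of `M` that are first-order definable over `𝕄` with
class parameters. Quantified variables are de Bruijn indices: the bound variable is `v 0` and the
ambient assignment is shifted by one. -/
inductive Definable (𝕄 : GBModel.{u}) : ((ℕ → ZFSet.{u}) → Prop) → Prop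
  | mem (i j : ℕ) : Definable 𝕄 fun v => v i ∈ v j
  | eq (i j : ℕ) : Definable 𝕄 fun v => v i = v j
  | cls (i : ℕ) {C : Set ZFSet.{u}} (hC : C ∈ 𝕄.Cls) : Definable 𝕄 fun v => v i ∈ C
  | not {A : (ℕ → ZFSet.{u}) → Prop} : Definable 𝕄 A → Definable 𝕄 fun v => ¬ A v
  | or {A B : (ℕ → ZFSet.{u}) → Prop} :
      Definable 𝕄 A → Definable 𝕄 B → Definable 𝕄 fun v => A v ∨ B v
  | ex {A : ZFSet.{u} → (ℕ → ZFSet.{u}) → Prop} :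
      (Definable 𝕄 fun v => A (v 0) fun n => v (n + 1)) → Definable 𝕄 fun v => ∃ x ∈ 𝕄.M, A x v
  | congr {A B : (ℕ → ZFSet.{u}) → Prop} : Definable 𝕄 A →
      (∀ v : ℕ → ZFSet.{u}, (∀ n, v n ∈ 𝕄.M) → (A v ↔ B v)) → Definable 𝕄 B

/-- Definability of a unary relation on `M`. -/
abbrev Definable₁ (𝕄 : GBModel.{u}) (A : ZFSet.{u} → Prop) : Prop :=
  Definable 𝕄 fun v => A (v 0)

/-- Definability of a binary relation on `M`. -/
abbrev Definable₂ (𝕄 : GBModel.{u}) (A : ZFSet.{u} → ZFSet.{u} → Prop) : Prop :=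
  Definable 𝕄 fun v => A (v 0) (v 1)

/-- Definability of a ternary relation on `M`. -/
abbrev Definable₃ (𝕄 : GBModel.{u}) (A : ZFSet.{u} → ZFSet.{u} → ZFSet.{u} → Prop) : Prop :=
  Definable 𝕄 fun v => A (v 0) (v 1) (v 2)

/-- Definability of a quaternary relation on `M`. -/
abbrev Definable₄ (𝕄 : GBModel.{u})
    (A : ZFSet.{u} → ZFSet.{u} → ZFSet.{u} → ZFSet.{u} → Prop) : Prop :=
  Definable 𝕄 fun v => A (v 0) (v 1) (v 2) (v 3)

variable {𝕄 : GBModel.{u}}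

lemma update_mem {C : Set ZFSet.{u}} {v : ℕ → ZFSet.{u}} {x : ZFSet.{u}} (hv : ∀ n, v n ∈ C)
    (hx : x ∈ C) (i : ℕ) : ∀ n, Function.update v i x n ∈ C :=
  (Function.forall_update_iff v fun _ y => y ∈ C).2 ⟨hx, fun n _ => hv n⟩

/-- The formula `φ` with class parameters `Cs` defines the predicate `A`. The `n`-th argument of
`A` is the variable `2 * n`, so that the odd variables are available for quantification. -/
def GBFormula.Defines (𝕄 : GBModel.{u}) (φ : GBFormula) (Cs : ℕ → Set ZFSet.{u})
    (A : (ℕ → ZFSet.{u}) → Prop) : Prop :=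
  (∀ n, Cs n ∈ 𝕄.Cls) ∧ ∀ v : ℕ → ZFSet.{u}, (∀ n, v n ∈ 𝕄.M) →
    (φ.Sat 𝕄.M Cs v ↔ A fun n => v (2 * n))

lemma GBFormula.Defines.or {φ ψ : GBFormula} {Cs Ds : ℕ → Set ZFSet.{u}}
    {A B : (ℕ → ZFSet.{u}) → Prop} (hφ : φ.Defines 𝕄 Cs A) (hψ : ψ.Defines 𝕄 Ds B) :
    ∃ (χ : GBFormula) (Es : ℕ → Set ZFSet.{u}), χ.Defines 𝕄 Es fun v => A v ∨ B v := by
  let e : ℕ ⊕ ℕ ≃ ℕ := Equiv.natSumNatEquivNat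
  refine ⟨.or (φ.rename id (e ∘ .inl)) (ψ.rename id (e ∘ .inr)), Sum.elim Cs Ds ∘ e.symm,
    fun n => ?_, fun v hv => ?_⟩
  · rcases h : e.symm n with k | k
    · simpa [h] using hφ.1 k
    · simpa [h] using hψ.1 k
  · refine or_congr ?_ ?_ <;> rw [GBFormula.sat_rename Function.injective_id]
    · rw [← hφ.2 v hv, Function.comp_assoc, ← Function.comp_assoc _ e, e.symm_comp_self]
      rfl
    · rw [← hψ.2 v hv, Function.comp_assoc, ← Function.comp_assoc _ e, e.symm_comp_self]
      rfl

lemma GBFormula.Defines.ex {φ : GBFormula} {Cs : ℕ → Set ZFSet.{u}}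
    {A : ZFSet.{u} → (ℕ → ZFSet.{u}) → Prop}
    (hφ : φ.Defines 𝕄 Cs fun v => A (v 0) fun n => v (n + 1)) :
    ∃ χ : GBFormula, χ.Defines 𝕄 Cs fun v => ∃ x ∈ 𝕄.M, A x v := by
  -- `f` makes room: the bound variable `0` becomes `1`, the others are shifted down.
  let f : ℕ → ℕ := fun n => if n % 2 = 0 then if n = 0 then 1 else n - 2 else 2 * n + 1
  have hf : f.Injective := fun a b hab => by
    simp only [f] at hab
    split_ifs at hab <;> omega
  have hf_succ (n : ℕ) : f (2 * (n + 1)) = 2 * n := by simp [f]; omega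
  refine ⟨.ex 1 (φ.rename f id), hφ.1, fun v hv => exists_congr fun x =>
    and_congr_right fun hx => ?_⟩
  rw [GBFormula.sat_rename hf]
  refine (hφ.2 _ fun n => update_mem hv hx 1 (f n)).trans ?_
  have hzero : Function.update v 1 x (f (2 * 0)) = x := by simp [f]
  have hsucc (n : ℕ) : Function.update v 1 x (f (2 * (n + 1))) = v (2 * n) := by
    rw [hf_succ, Function.update_of_ne (by omega)]
  simp only [hzero, hsucc]

namespace Definable

variable {A B : (ℕ → ZFSet.{u}) → Prop}

lemma exists_defines (h : Definable 𝕄 A) :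
    ∃ (φ : GBFormula) (Cs : ℕ → Set ZFSet.{u}), φ.Defines 𝕄 Cs A := by
  have hempty : (∅ : ZFSet.{u}).toSet ∈ 𝕄.Cls := 𝕄.sets_are_classes _ 𝕄.empty_mem
  induction h with
  | mem i j => exact ⟨.mem (2 * i) (2 * j), fun _ => _, fun _ => hempty, fun _ _ => Iff.rfl⟩
  | eq i j => exact ⟨.eq (2 * i) (2 * j), fun _ => _, fun _ => hempty, fun _ _ => Iff.rfl⟩
  | cls i hC => exact ⟨.cls (2 * i) 0, fun _ => _, fun _ => hC, fun _ _ => Iff.rfl⟩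
  | not _ ih =>
    obtain ⟨φ, Cs, hφ⟩ := ih
    exact ⟨.not φ, Cs, hφ.1, fun v hv => not_congr (hφ.2 v hv)⟩
  | or _ _ ihA ihB =>
    obtain ⟨φ, Cs, hφ⟩ := ihA
    obtain ⟨ψ, Ds, hψ⟩ := ihB
    exact hφ.or hψ
  | ex _ ih =>
    obtain ⟨φ, Cs, hφ⟩ := ih
    obtain ⟨χ, hχ⟩ := hφ.ex
    exact ⟨χ, Cs, hχ⟩
  | congr _ hAB ih =>
    obtain ⟨φ, Cs, hφ⟩ := ih
    exact ⟨φ, Cs, hφ.1, fun v hv => (hφ.2 v hv).trans (hAB _ fun n => hv _)⟩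

lemma setOf_mem_Cls {A : ZFSet.{u} → Prop} (h : Definable₁ 𝕄 A) :
    {x | x ∈ 𝕄.M ∧ A x} ∈ 𝕄.Cls := by
  obtain ⟨φ, Cs, hCs, hφ⟩ := h.exists_defines
  convert 𝕄.comprehension φ (fun _ => ∅) Cs (fun _ => 𝕄.empty_mem) hCs using 1
  ext x
  refine and_congr_right fun hx => ?_
  rw [hφ _ (update_mem (fun _ => 𝕄.empty_mem) hx 0)]
  simp

lemma rename (h : Definable 𝕄 A) (g : ℕ → ℕ) : Definable 𝕄 fun v => A fun n => v (g n) := by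
  induction h generalizing g with
  | mem i j => exact mem (g i) (g j)
  | eq i j => exact eq (g i) (g j)
  | cls i hC => exact cls (g i) hC
  | not _ ih => exact (ih g).not
  | or _ _ ihA ihB => exact (ihA g).or (ihB g)
  | ex _ ih => exact ex (ih fun | 0 => 0 | k + 1 => g k + 1)
  | congr _ hAB ih => exact (ih g).congr fun v hv => hAB _ fun n => hv _

protected lemma and (hA : Definable 𝕄 A) (hB : Definable 𝕄 B) :
    Definable 𝕄 fun v => A v ∧ B v :=
  (hA.not.or hB.not).not.congr fun _ _ => by tauto

protected lemma imp (hA : Definable 𝕄 A) (hB : Definable 𝕄 B) :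
    Definable 𝕄 fun v => A v → B v :=
  (hA.not.or hB).congr fun _ _ => by tauto

protected lemma iff (hA : Definable 𝕄 A) (hB : Definable 𝕄 B) :
    Definable 𝕄 fun v => (A v ↔ B v) :=
  ((hA.imp hB).and (hB.imp hA)).congr fun _ _ => by tauto

protected lemma all {A : ZFSet.{u} → (ℕ → ZFSet.{u}) → Prop}
    (h : Definable 𝕄 fun v => A (v 0) fun n => v (n + 1)) :
    Definable 𝕄 fun v => ∀ x ∈ 𝕄.M, A x v :=
  (ex (A := fun x v => ¬ A x v) h.not).not.congr fun v _ => by simp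

end Definable

/-- Functions on assignments with values in `M` whose graph is definable over `𝕄`. -/
structure DefinableTerm (𝕄 : GBModel.{u}) (t : (ℕ → ZFSet.{u}) → ZFSet.{u}) : Prop where
  mem_M : ∀ v : ℕ → ZFSet.{u}, (∀ n, v n ∈ 𝕄.M) → t v ∈ 𝕄.M
  definable_graph : Definable 𝕄 fun v => v 0 = t fun n => v (n + 1)

section Terms

variable {t s r : (ℕ → ZFSet.{u}) → ZFSet.{u}} {A : ZFSet.{u} → (ℕ → ZFSet.{u}) → Prop}

lemma DefinableTerm.var (i : ℕ) : DefinableTerm 𝕄 fun v => v i :=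
  ⟨fun _ hv => hv i, .eq 0 (i + 1)⟩

lemma DefinableTerm.shift (ht : DefinableTerm 𝕄 t) :
    DefinableTerm 𝕄 fun v => t fun n => v (n + 1) :=
  ⟨fun _ hv => ht.mem_M _ fun _ => hv _,
    ht.definable_graph.rename fun | 0 => 0 | k + 1 => k + 2⟩

lemma DefinableTerm.const {c : ZFSet.{u}} (hc : c ∈ 𝕄.M) : DefinableTerm 𝕄 fun _ => c := by
  refine ⟨fun _ _ => hc, (Definable.all (A := fun x v => x ∈ v 0 ↔ x ∈ c.toSet)
    ((Definable.mem 0 1).iff (.cls 0 (𝕄.sets_are_classes c hc)))).congr fun v hv => ?_⟩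
  refine ⟨fun h => ZFSet.ext fun x => ⟨fun hx => ?_, fun hx => ?_⟩, by rintro h x -; rw [h]; rfl⟩
  · exact (h x (𝕄.transitive _ (hv 0) _ hx)).1 hx
  · exact (h x (𝕄.transitive _ hc _ hx)).2 hx

namespace Definable

lemma subst (ht : DefinableTerm 𝕄 t) (h : Definable 𝕄 fun v => A (v 0) fun n => v (n + 1)) :
    Definable 𝕄 fun v => A (t v) v :=
  (ex (A := fun x v => x = t v ∧ A x v) (ht.definable_graph.and h)).congr fun v hv =>
    ⟨fun ⟨_, _, e, hx⟩ => e ▸ hx, fun hx => ⟨_, ht.mem_M v hv, rfl, hx⟩⟩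

lemma mem_term (ht : DefinableTerm 𝕄 t) (hs : DefinableTerm 𝕄 s) :
    Definable 𝕄 fun v => t v ∈ s v :=
  subst (A := fun x v => x ∈ s v) ht <| subst (A := fun y v => v 0 ∈ y) hs.shift <| mem 1 0

lemma eq_term (ht : DefinableTerm 𝕄 t) (hs : DefinableTerm 𝕄 s) :
    Definable 𝕄 fun v => t v = s v :=
  subst (A := fun x v => x = s v) ht <| subst (A := fun y v => v 0 = y) hs.shift <| eq 1 0

lemma cls_term {C : Set ZFSet.{u}} (hC : C ∈ 𝕄.Cls) (ht : DefinableTerm 𝕄 t) :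
    Definable 𝕄 fun v => t v ∈ C :=
  subst (A := fun x _ => x ∈ C) ht <| cls 0 hC

lemma comp {A : (ℕ → ZFSet.{u}) → Prop} (h : Definable 𝕄 A)
    {t : ℕ → (ℕ → ZFSet.{u}) → ZFSet.{u}} (ht : ∀ n, DefinableTerm 𝕄 (t n)) :
    Definable 𝕄 fun v => A fun n => t n v := by
  induction h generalizing t with
  | mem i j => exact mem_term (ht i) (ht j)
  | eq i j => exact eq_term (ht i) (ht j)
  | cls i hC => exact cls_term hC (ht i)
  | not _ ih => exact (ih ht).not
  | or _ _ ihA ihB => exact (ihA ht).or (ihB ht)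
  | ex _ ih =>
    exact ex (ih (t := fun | 0 => fun v => v 0 | k + 1 => fun v => t k fun n => v (n + 1))
      fun | 0 => .var 0 | k + 1 => (ht k).shift)
  | congr _ hAB ih => exact (ih ht).congr fun v hv => hAB _ fun n => (ht n).mem_M v hv

end Definable

lemma Definable₁.comp {A : ZFSet.{u} → Prop} (h : Definable₁ 𝕄 A) (ht : DefinableTerm 𝕄 t) :
    Definable 𝕄 fun v => A (t v) :=
  Definable.comp h (t := fun _ => t) fun _ => ht

lemma Definable₂.comp {A : ZFSet.{u} → ZFSet.{u} → Prop} (h : Definable₂ 𝕄 A)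
    (ht : DefinableTerm 𝕄 t) (hs : DefinableTerm 𝕄 s) : Definable 𝕄 fun v => A (t v) (s v) :=
  Definable.comp h (t := fun | 0 => t | _ + 1 => s) fun | 0 => ht | _ + 1 => hs

lemma Definable₃.comp {A : ZFSet.{u} → ZFSet.{u} → ZFSet.{u} → Prop} (h : Definable₃ 𝕄 A)
    (ht : DefinableTerm 𝕄 t) (hs : DefinableTerm 𝕄 s) (hr : DefinableTerm 𝕄 r) :
    Definable 𝕄 fun v => A (t v) (s v) (r v) :=
  Definable.comp h (t := fun | 0 => t | 1 => s | _ + 2 => r) fun | 0 => ht | 1 => hs | _ + 2 => hr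

lemma Definable₄.comp {A : ZFSet.{u} → ZFSet.{u} → ZFSet.{u} → ZFSet.{u} → Prop}
    {q : (ℕ → ZFSet.{u}) → ZFSet.{u}} (h : Definable₄ 𝕄 A) (ht : DefinableTerm 𝕄 t)
    (hs : DefinableTerm 𝕄 s) (hr : DefinableTerm 𝕄 r) (hq : DefinableTerm 𝕄 q) :
    Definable 𝕄 fun v => A (t v) (s v) (r v) (q v) :=
  Definable.comp h (t := fun | 0 => t | 1 => s | 2 => r | _ + 3 => q)
    fun | 0 => ht | 1 => hs | 2 => hr | _ + 3 => hq

namespace Definable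

lemma exists_mem (ht : DefinableTerm 𝕄 t) (h : Definable 𝕄 fun v => A (v 0) fun n => v (n + 1)) :
    Definable 𝕄 fun v => ∃ x ∈ t v, A x v :=
  (ex (A := fun x v => x ∈ t v ∧ A x v) ((mem_term (.var 0) ht.shift).and h)).congr fun v hv =>
    exists_congr fun x => and_iff_right_of_imp fun hx => 𝕄.transitive _ (ht.mem_M v hv) x hx.1

lemma forall_mem (ht : DefinableTerm 𝕄 t) (h : Definable 𝕄 fun v => A (v 0) fun n => v (n + 1)) :
    Definable 𝕄 fun v => ∀ x ∈ t v, A x v :=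
  (exists_mem (A := fun x v => ¬ A x v) ht h.not).not.congr fun v _ => by simp

lemma exists_mem_cls {C : Set ZFSet.{u}} (hC : C ∈ 𝕄.Cls)
    (h : Definable 𝕄 fun v => A (v 0) fun n => v (n + 1)) :
    Definable 𝕄 fun v => ∃ x ∈ C, A x v :=
  (ex (A := fun x v => x ∈ C ∧ A x v) ((cls 0 hC).and h)).congr fun _ _ =>
    exists_congr fun _ => and_iff_right_of_imp fun hx => 𝕄.classes_sub _ hC hx.1

lemma exists_update {A : (ℕ → ZFSet.{u}) → Prop} (h : Definable 𝕄 A) {C : Set ZFSet.{u}}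
    (hC : C ∈ 𝕄.Cls) (i : ℕ) : Definable 𝕄 fun v => ∃ x ∈ C, A (Function.update v i x) := by
  refine exists_mem_cls (A := fun x v => A (Function.update v i x)) hC ?_
  refine (h.rename fun n => if n = i then 0 else n + 1).congr fun v _ => ?_
  have hupdate : (fun n => v (if n = i then 0 else n + 1)) =
      Function.update (fun n => v (n + 1)) i (v 0) := by
    funext n
    rcases eq_or_ne n i with rfl | h
    · simp
    · simp [h]
  rw [hupdate]

end Definable

end Terms

/-! ### Set existence in a model -/

namespace GBModel

lemma singleton_mem {x : ZFSet.{u}} (hx : x ∈ 𝕄.M) : ({x} : ZFSet.{u}) ∈ 𝕄.M := by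
  simpa only [ZFSet.pair_eq_singleton] using 𝕄.pair_mem x hx x hx

lemma union_mem {x y : ZFSet.{u}} (hx : x ∈ 𝕄.M) (hy : y ∈ 𝕄.M) : x ∪ y ∈ 𝕄.M :=
  𝕄.sUnion_mem _ (𝕄.pair_mem _ hx _ hy)

lemma opair_mem {x y : ZFSet.{u}} (hx : x ∈ 𝕄.M) (hy : y ∈ 𝕄.M) : x.pair y ∈ 𝕄.M :=
  𝕄.pair_mem _ (singleton_mem hx) _ (𝕄.pair_mem _ hx _ hy)

lemma mem_of_opair_mem {x y : ZFSet.{u}} (h : x.pair y ∈ 𝕄.M) : x ∈ 𝕄.M ∧ y ∈ 𝕄.M := by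
  have hxy : ({x, y} : ZFSet.{u}) ∈ 𝕄.M := 𝕄.transitive _ h _ (by simp [ZFSet.pair])
  exact ⟨𝕄.transitive _ hxy _ (by simp), 𝕄.transitive _ hxy _ (by simp)⟩

end GBModel

section Pairs

variable {t s : (ℕ → ZFSet.{u}) → ZFSet.{u}}

lemma DefinableTerm.upair (ht : DefinableTerm 𝕄 t) (hs : DefinableTerm 𝕄 s) :
    DefinableTerm 𝕄 fun v => {t v, s v} := by
  have hgraph : Definable₃ 𝕄 fun a b c => a = {b, c} := by
    refine (Definable.all (A := fun x v => x ∈ v 0 ↔ (x = v 1 ∨ x = v 2))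
      ((Definable.mem 0 1).iff ((Definable.eq 0 2).or (.eq 0 3)))).congr fun v hv =>
      ⟨fun h => ZFSet.ext fun x => ?_, by rintro h x -; rw [h, ZFSet.mem_pair]⟩
    rw [ZFSet.mem_pair]
    refine ⟨fun hx => (h x (𝕄.transitive _ (hv 0) _ hx)).1 hx, ?_⟩
    rintro (rfl | rfl)
    · exact (h _ (hv 1)).2 (.inl rfl)
    · exact (h _ (hv 2)).2 (.inr rfl)
  exact ⟨fun v hv => 𝕄.pair_mem _ (ht.mem_M v hv) _ (hs.mem_M v hv),
    Definable₃.comp hgraph (.var 0) ht.shift hs.shift⟩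

lemma DefinableTerm.pair (ht : DefinableTerm 𝕄 t) (hs : DefinableTerm 𝕄 s) :
    DefinableTerm 𝕄 fun v => (t v).pair (s v) := by
  simpa only [ZFSet.pair, ZFSet.pair_eq_singleton] using (ht.upair ht).upair (ht.upair hs)

lemma Definable.exists_pair_mem {A : ZFSet.{u} → ZFSet.{u} → (ℕ → ZFSet.{u}) → Prop}
    (ht : DefinableTerm 𝕄 t) (h : Definable 𝕄 fun v => A (v 1) (v 0) fun n => v (n + 2)) :
    Definable 𝕄 fun v => ∃ x y, x.pair y ∈ t v ∧ A x y v := by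
  have hex : Definable 𝕄 fun v => ∃ x ∈ 𝕄.M, ∃ y ∈ 𝕄.M, x.pair y ∈ t v ∧ A x y v :=
    .ex (.ex ((mem_term (.pair (.var 1) (.var 0)) ht.shift.shift).and h))
  refine hex.congr fun v hv => ⟨fun ⟨x, _, y, _, hxy⟩ => ⟨x, y, hxy⟩, fun ⟨x, y, hxy⟩ => ?_⟩
  obtain ⟨hx, hy⟩ := GBModel.mem_of_opair_mem (𝕄.transitive _ (ht.mem_M v hv) _ hxy.1)
  exact ⟨x, hx, y, hy, hxy⟩

lemma Definable.forall_pair_mem {A : ZFSet.{u} → ZFSet.{u} → (ℕ → ZFSet.{u}) → Prop}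
    (ht : DefinableTerm 𝕄 t) (h : Definable 𝕄 fun v => A (v 1) (v 0) fun n => v (n + 2)) :
    Definable 𝕄 fun v => ∀ x y, x.pair y ∈ t v → A x y v :=
  (exists_pair_mem (A := fun x y v => ¬ A x y v) ht h.not).not.congr fun v _ => by simp

lemma fstZ_pair (a b : ZFSet.{u}) : fstZ (a.pair b) = a := by
  have h : ∃ x y : ZFSet.{u}, a.pair b = x.pair y := ⟨a, b, rfl⟩
  rw [fstZ, dif_pos h]
  exact (ZFSet.pair_inj.1 h.choose_spec.choose_spec).1.symm

lemma sndZ_pair (a b : ZFSet.{u}) : sndZ (a.pair b) = b := by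
  have h : ∃ x y : ZFSet.{u}, a.pair b = x.pair y := ⟨a, b, rfl⟩
  rw [sndZ, dif_pos h]
  exact (ZFSet.pair_inj.1 h.choose_spec.choose_spec).2.symm

lemma fstZ_of_not_pair {x : ZFSet.{u}} (h : ¬ ∃ a b : ZFSet.{u}, x = a.pair b) : fstZ x = ∅ :=
  dif_neg h

lemma sndZ_of_not_pair {x : ZFSet.{u}} (h : ¬ ∃ a b : ZFSet.{u}, x = a.pair b) : sndZ x = ∅ :=
  dif_neg h

lemma DefinableTerm.of_graph {f : ZFSet.{u} → ZFSet.{u}} (ht : DefinableTerm 𝕄 t)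
    (hmem : ∀ x ∈ 𝕄.M, f x ∈ 𝕄.M) (hf : Definable₂ 𝕄 fun y x => y = f x) :
    DefinableTerm 𝕄 fun v => f (t v) :=
  ⟨fun v hv => hmem _ (ht.mem_M v hv),
    Definable₂.comp (A := fun y x => y = f x) hf (.var 0) ht.shift⟩

lemma Definable.exists_eq_pair : Definable₁ 𝕄 fun x => ∃ a b : ZFSet.{u}, x = a.pair b := by
  have hex : Definable₁ 𝕄 fun x => ∃ a ∈ 𝕄.M, ∃ b ∈ 𝕄.M, x = a.pair b :=
    .ex (.ex (.eq_term (.var _) (.pair (.var _) (.var _))))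
  refine hex.congr fun v hv => ⟨fun ⟨a, _, b, _, h⟩ => ⟨a, b, h⟩, fun ⟨a, b, h⟩ => ?_⟩
  obtain ⟨ha, hb⟩ := GBModel.mem_of_opair_mem (h ▸ hv 0)
  exact ⟨a, ha, b, hb, h⟩

lemma DefinableTerm.fst (ht : DefinableTerm 𝕄 t) : DefinableTerm 𝕄 fun v => fstZ (t v) := by
  have hgraph : Definable₂ 𝕄 fun y x =>
      (∃ b ∈ 𝕄.M, x = y.pair b) ∨ (¬ ∃ a b : ZFSet.{u}, x = a.pair b) ∧ y = ∅ :=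
    (Definable.ex (.eq_term (.var _) (.pair (.var _) (.var _)))).or
      ((Definable₁.comp .exists_eq_pair (.var 1)).not.and
        (.eq_term (.var 0) (.const 𝕄.empty_mem)))
  refine .of_graph ht (fun x hx => ?_) (hgraph.congr fun v hv => ?_)
  · by_cases h : ∃ a b : ZFSet.{u}, x = a.pair b
    · obtain ⟨a, b, rfl⟩ := h
      exact (fstZ_pair a b).symm ▸ (GBModel.mem_of_opair_mem hx).1
    · exact (fstZ_of_not_pair h).symm ▸ 𝕄.empty_mem
  · by_cases h : ∃ a b : ZFSet.{u}, v 1 = a.pair b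
    · obtain ⟨a, b, h⟩ := h
      have hb := (GBModel.mem_of_opair_mem (h ▸ hv 1)).2
      simp only [h, fstZ_pair, ZFSet.pair_inj]
      grind
    · grind [fstZ_of_not_pair h]

lemma DefinableTerm.snd (ht : DefinableTerm 𝕄 t) : DefinableTerm 𝕄 fun v => sndZ (t v) := by
  have hgraph : Definable₂ 𝕄 fun y x =>
      (∃ a ∈ 𝕄.M, x = a.pair y) ∨ (¬ ∃ a b : ZFSet.{u}, x = a.pair b) ∧ y = ∅ :=
    (Definable.ex (.eq_term (.var _) (.pair (.var _) (.var _)))).or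
      ((Definable₁.comp .exists_eq_pair (.var 1)).not.and
        (.eq_term (.var 0) (.const 𝕄.empty_mem)))
  refine .of_graph ht (fun x hx => ?_) (hgraph.congr fun v hv => ?_)
  · by_cases h : ∃ a b : ZFSet.{u}, x = a.pair b
    · obtain ⟨a, b, rfl⟩ := h
      exact (sndZ_pair a b).symm ▸ (GBModel.mem_of_opair_mem hx).2
    · exact (sndZ_of_not_pair h).symm ▸ 𝕄.empty_mem
  · by_cases h : ∃ a b : ZFSet.{u}, v 1 = a.pair b
    · obtain ⟨a, b, h⟩ := h
      have ha := (GBModel.mem_of_opair_mem (h ▸ hv 1)).1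
      simp only [h, sndZ_pair, ZFSet.pair_inj]
      grind
    · grind [sndZ_of_not_pair h]

end Pairs

namespace GBModel

lemma exists_sep {A : ZFSet.{u} → Prop} (hA : Definable₁ 𝕄 A) {a : ZFSet.{u}} (ha : a ∈ 𝕄.M) :
    ∃ b ∈ 𝕄.M, ∀ x, x ∈ b ↔ x ∈ a ∧ A x := by
  obtain ⟨b, hb, hmem⟩ := 𝕄.separation _ hA.setOf_mem_Cls a ha
  exact ⟨b, hb, fun x => (hmem x).trans <| and_congr_right fun hx =>
    and_iff_right (𝕄.transitive _ ha _ hx)⟩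

lemma exists_collection {A : ZFSet.{u} → ZFSet.{u} → Prop} (hA : Definable₂ 𝕄 A) {a : ZFSet.{u}}
    (ha : a ∈ 𝕄.M) (h : ∀ x ∈ a, ∃ y ∈ 𝕄.M, A x y) : ∃ b ∈ 𝕄.M, ∀ x ∈ a, ∃ y ∈ b, A x y := by
  have hgraph : Definable₁ 𝕄 fun z => ∃ x ∈ 𝕄.M, ∃ y ∈ 𝕄.M, z = x.pair y ∧ A x y :=
    .ex (.ex ((Definable.eq_term (.var _) (.pair (.var _) (.var _))).and
      (Definable₂.comp hA (.var 1) (.var 0))))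
  obtain ⟨b, hb, hmem⟩ := 𝕄.collection _ hgraph.setOf_mem_Cls a ha fun x hx => by
    obtain ⟨y, hy, hxy⟩ := h x hx
    have hxM := 𝕄.transitive _ ha _ hx
    exact ⟨y, hy, opair_mem hxM hy, x, hxM, y, hy, rfl, hxy⟩
  refine ⟨b, hb, fun x hx => ?_⟩
  obtain ⟨y, hy, -, x', -, y', -, e, hxy⟩ := hmem x hx
  obtain ⟨rfl, rfl⟩ := ZFSet.pair_inj.1 e
  exact ⟨y, hy, hxy⟩

lemma exists_prod_subset {a b : ZFSet.{u}} (ha : a ∈ 𝕄.M) (hb : b ∈ 𝕄.M) :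
    ∃ c ∈ 𝕄.M, ∀ x ∈ a, ∀ y ∈ b, x.pair y ∈ c := by
  have hslice : ∀ x ∈ a, ∃ c ∈ 𝕄.M, ∀ y ∈ b, x.pair y ∈ c := fun x hx => by
    have hxM := 𝕄.transitive _ ha _ hx
    obtain ⟨c, hc, hmem⟩ := exists_collection (A := fun y z => z = x.pair y)
      (.eq_term (.var _) (.pair (.const hxM) (.var _))) hb
      fun y hy => ⟨_, opair_mem hxM (𝕄.transitive _ hb _ hy), rfl⟩
    refine ⟨c, hc, fun y hy => ?_⟩
    obtain ⟨z, hz, rfl⟩ := hmem y hy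
    exact hz
  obtain ⟨d, hd, hmem⟩ := exists_collection (A := fun x c => ∀ y ∈ b, x.pair y ∈ c)
    (.forall_mem (.const hb) (.mem_term (.pair (.var _) (.var _)) (.var _))) ha hslice
  refine ⟨_, 𝕄.sUnion_mem _ hd, fun x hx y hy => ?_⟩
  obtain ⟨c, hc, hxc⟩ := hmem x hx
  exact ZFSet.mem_sUnion_of_mem (hxc y hy) hc

end GBModel

/-- Every element of an element of `N` satisfies `K · N`; for instance `N` is transitive if
`K` is membership. -/
def ClosedUnder (K : ZFSet.{u} → ZFSet.{u} → Prop) (N : ZFSet.{u}) : Prop :=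
  ∀ τ ∈ N, ∀ x ∈ τ, K x N

lemma Definable₂.closedUnder {K : ZFSet.{u} → ZFSet.{u} → Prop} (hK : Definable₂ 𝕄 K) :
    Definable₁ 𝕄 (ClosedUnder K) :=
  Definable.forall_mem (.var 0) (.forall_mem (.var 0) (Definable₂.comp hK (.var 0) (.var 2)))

lemma exists_closedUnder_of_forall_mem {K : ZFSet.{u} → ZFSet.{u} → Prop} (hK : Definable₂ 𝕄 K)
    (hmono : ∀ ⦃x N N'⦄, N ⊆ N' → K x N → K x N') {σ : ZFSet.{u}} (hσ : σ ∈ 𝕄.M)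
    (h : ∀ x ∈ σ, ∃ N ∈ 𝕄.M, K x N ∧ ClosedUnder K N) :
    ∃ N ∈ 𝕄.M, σ ∈ N ∧ ClosedUnder K N := by
  obtain ⟨b, hb, hbK⟩ := GBModel.exists_collection
    (hK.and (Definable₁.comp hK.closedUnder (.var 1))) hσ h
  obtain ⟨c, hc, hcb⟩ := GBModel.exists_sep hK.closedUnder hb
  have hsub : ∀ N ∈ c, N ⊆ c.sUnion ∪ {σ} := fun N hN z hz =>
    ZFSet.mem_union.2 (.inl (ZFSet.mem_sUnion_of_mem hz hN))
  refine ⟨c.sUnion ∪ {σ}, GBModel.union_mem (𝕄.sUnion_mem _ hc) (GBModel.singleton_mem hσ),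
    by simp, fun τ hτ x hx => ?_⟩
  rcases ZFSet.mem_union.1 hτ with hτ | hτ
  · obtain ⟨N, hN, hτN⟩ := ZFSet.mem_sUnion.1 hτ
    exact hmono (hsub N hN) (((hcb N).1 hN).2 τ hτN x hx)
  · obtain rfl := ZFSet.mem_singleton.1 hτ
    obtain ⟨N, hN, hxN, hclosed⟩ := hbK x hx
    exact hmono (hsub N ((hcb N).2 ⟨hN, hclosed⟩)) hxN

lemma exists_transitive_superset {σ : ZFSet.{u}} (hσ : σ ∈ 𝕄.M) :
    ∃ T ∈ 𝕄.M, σ ∈ T ∧ T.IsTransitive := by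
  induction σ using ZFSet.inductionOn with
  | _ σ ih =>
    refine exists_closedUnder_of_forall_mem (K := fun x N => x ∈ N) (.mem 0 1)
      (fun _ _ _ h hx => h hx) hσ fun x hx => ?_
    exact ih x hx (𝕄.transitive _ hσ _ hx)

/-! ### The recursion for forced equality -/

lemma rank_lt_of_pair_mem {ρ a σ : ZFSet.{u}} (h : ρ.pair a ∈ σ) : ρ.rank < σ.rank := by
  have hρ : ρ ∈ ({ρ} : ZFSet.{u}) := ZFSet.mem_singleton.2 rfl
  have hpair : {ρ} ∈ ρ.pair a := ZFSet.mem_pair.2 (.inl rfl)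
  exact (ZFSet.rank_lt_of_mem hρ).trans <|
    (ZFSet.rank_lt_of_mem hpair).trans (ZFSet.rank_lt_of_mem h)

lemma mem_of_pair_mem_of_isTransitive {T ρ a σ : ZFSet.{u}} (hT : T.IsTransitive) (hσ : σ ∈ T)
    (h : ρ.pair a ∈ σ) : ρ ∈ T ∧ a ∈ T := by
  have hρa : ({ρ, a} : ZFSet.{u}) ∈ T := hT _ (hT σ hσ h) (by simp [ZFSet.pair])
  exact ⟨hT _ hρa (by simp), hT _ hρa (by simp)⟩

@[elab_as_elim]
lemma name_induction {C : ZFSet.{u} → Prop} (σ : ZFSet.{u})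
    (h : ∀ σ, (∀ ρ a, ρ.pair a ∈ σ → C ρ) → C σ) : C σ := by
  induction hσ : σ.rank using WellFoundedLT.induction generalizing σ with
  | _ o ih => exact h σ fun ρ a hρ => ih _ (hσ ▸ rank_lt_of_pair_mem hρ) ρ rfl

/-- Definable preorders on a subclass of `M`. The underlying class consists of the `p` with
`le p p`; it contains the left-hand side of every instance of `le`. -/
structure IsForcingOrder (𝕄 : GBModel.{u}) (le : ZFSet.{u} → ZFSet.{u} → Prop) : Prop where
  definable : Definable₂ 𝕄 le
  mem_M {p q : ZFSet.{u}} : le p q → p ∈ 𝕄.M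
  refl {p q : ZFSet.{u}} : le p q → le p p
  trans {p q r : ZFSet.{u}} : le p q → le q r → le p r

/-- The conditions satisfying `B` are dense below `p`. -/
def DenseBelow (le : ZFSet.{u} → ZFSet.{u} → Prop) (p : ZFSet.{u}) (B : ZFSet.{u} → Prop) : Prop :=
  ∀ q, le q p → ∃ r, le r q ∧ B r

section DenseBelow

variable {le : ZFSet.{u} → ZFSet.{u} → Prop} {p q : ZFSet.{u}}

lemma DenseBelow.mono {B : ZFSet.{u} → Prop} (hle : IsForcingOrder 𝕄 le) (hqp : le q p)
    (h : DenseBelow le p B) : DenseBelow le q B :=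
  fun r hrq => h r (hle.trans hrq hqp)

lemma DenseBelow.of_denseBelow {B : ZFSet.{u} → Prop} (hle : IsForcingOrder 𝕄 le)
    (h : DenseBelow le p fun r => DenseBelow le r B) : DenseBelow le p B := by
  intro q hqp
  obtain ⟨r, hrq, hr⟩ := h q hqp
  obtain ⟨s, hsr, hs⟩ := hr r (hle.refl hrq)
  exact ⟨s, hle.trans hsr hrq, hs⟩

end DenseBelow

section Clauses

variable (le : ZFSet.{u} → ZFSet.{u} → Prop) (S : ZFSet.{u} → ZFSet.{u} → ZFSet.{u} → Prop)

/-- The condition `r` lies below the second component of some `⟨ρ', b⟩ ∈ τ` and satisfies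
`S r ρ ρ'`, where `S` plays the role of `r ⊩ ρ = ρ'`. This holds on a set of `r` dense below `p`
if and only if `p ⊩ ρ ∈ τ`. -/
def MemClause (r ρ τ : ZFSet.{u}) : Prop :=
  ∃ ρ' b, ρ'.pair b ∈ τ ∧ le r b ∧ S r ρ ρ'

/-- The recursive clause for `p ⊩ σ ⊆ τ`, where `S` plays the role of `r ⊩ ρ = ρ'`. -/
def SubsetClause (p σ τ : ZFSet.{u}) : Prop :=
  ∀ ρ a, ρ.pair a ∈ σ → ∀ q, le q p → le q a → ∃ r, le r q ∧ MemClause le S r ρ τ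

/-- The recursive clause for `p ⊩ σ = τ`. It evaluates `S` only at pairs of a name in the domain
of `σ` and a name in the domain of `τ`, in this order. -/
def EqClause (p σ τ : ZFSet.{u}) : Prop :=
  SubsetClause le S p σ τ ∧ SubsetClause le (fun r ρ' ρ => S r ρ ρ') p τ σ

/-- The relation `p ⊩ σ = τ`, defined by recursion on `σ`. -/
def forcesEq (p σ τ : ZFSet.{u}) : Prop :=
  EqClause le (fun r ρ ρ' => ∃ _h : ρ.rank < σ.rank, forcesEq r ρ ρ') p σ τ
termination_by σ.rank

variable {le S} {S' : ZFSet.{u} → ZFSet.{u} → ZFSet.{u} → Prop} {p q r ρ σ τ : ZFSet.{u}}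

lemma memClause_congr (h : ∀ ρ' b, ρ'.pair b ∈ τ → (S r ρ ρ' ↔ S' r ρ ρ')) :
    MemClause le S r ρ τ ↔ MemClause le S' r ρ τ :=
  exists₂_congr fun ρ' b => and_congr_right fun hb => and_congr_right fun _ => h ρ' b hb

lemma subsetClause_congr (h : ∀ r q, le r q → ∀ ρ a, ρ.pair a ∈ σ → ∀ ρ' b, ρ'.pair b ∈ τ →
    (S r ρ ρ' ↔ S' r ρ ρ')) : SubsetClause le S p σ τ ↔ SubsetClause le S' p σ τ :=
  forall₃_congr fun ρ a hρ => forall₃_congr fun q _ _ => exists_congr fun r =>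
    and_congr_right fun hr => memClause_congr (h r q hr ρ a hρ)

lemma eqClause_congr (h : ∀ r q, le r q → ∀ ρ a, ρ.pair a ∈ σ → ∀ ρ' b, ρ'.pair b ∈ τ →
    (S r ρ ρ' ↔ S' r ρ ρ')) : EqClause le S p σ τ ↔ EqClause le S' p σ τ :=
  and_congr (subsetClause_congr h)
    (subsetClause_congr fun r q hr ρ' b hb ρ a ha => h r q hr ρ a ha ρ' b hb)

lemma forcesEq_iff : forcesEq le p σ τ ↔ EqClause le (forcesEq le) p σ τ := by
  rw [forcesEq]
  exact eqClause_congr fun _ _ _ _ _ hρ _ _ _ => exists_prop_of_true (rank_lt_of_pair_mem hρ)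

lemma MemClause.mono (hle : IsForcingOrder 𝕄 le)
    (hS : ∀ ρ', S r ρ ρ' → S q ρ ρ') (hqr : le q r) :
    MemClause le S r ρ τ → MemClause le S q ρ τ :=
  fun ⟨ρ', b, hb, hrb, h⟩ => ⟨ρ', b, hb, hle.trans hqr hrb, hS ρ' h⟩

lemma SubsetClause.mono (hle : IsForcingOrder 𝕄 le) (hqp : le q p)
    (h : SubsetClause le S p σ τ) : SubsetClause le S q σ τ :=
  fun ρ a hρ r hrq => h ρ a hρ r (hle.trans hrq hqp)

lemma SubsetClause.of_dense (hle : IsForcingOrder 𝕄 le)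
    (h : DenseBelow le p fun r => SubsetClause le S r σ τ) : SubsetClause le S p σ τ := by
  intro ρ a hρ q hqp hqa
  obtain ⟨r, hrq, hr⟩ := h q hqp
  obtain ⟨s, hsr, hs⟩ := hr ρ a hρ r (hle.refl hrq) (hle.trans hrq hqa)
  exact ⟨s, hle.trans hsr hrq, hs⟩

lemma forcesEq_mono (hle : IsForcingOrder 𝕄 le) (hqp : le q p) (h : forcesEq le p σ τ) :
    forcesEq le q σ τ :=
  have ⟨hστ, hτσ⟩ := forcesEq_iff.1 h
  forcesEq_iff.2 ⟨hστ.mono hle hqp, hτσ.mono hle hqp⟩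

lemma forcesEq_of_dense (hle : IsForcingOrder 𝕄 le)
    (h : DenseBelow le p fun r => forcesEq le r σ τ) : forcesEq le p σ τ := by
  have hclauses : DenseBelow le p fun r => EqClause le (forcesEq le) r σ τ := by
    simpa only [forcesEq_iff] using h
  exact forcesEq_iff.2 ⟨.of_dense hle fun q hq => (hclauses q hq).imp fun _ hr => ⟨hr.1, hr.2.1⟩,
    .of_dense hle fun q hq => (hclauses q hq).imp fun _ hr => ⟨hr.1, hr.2.2⟩⟩

end Clauses

section DefinableClauses

variable {le : ZFSet.{u} → ZFSet.{u} → Prop}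
  {S : ZFSet.{u} → ZFSet.{u} → ZFSet.{u} → ZFSet.{u} → Prop}
  {t : (ℕ → ZFSet.{u}) → ZFSet.{u}} {A : ZFSet.{u} → (ℕ → ZFSet.{u}) → Prop}

lemma IsForcingOrder.definable_exists_le (hle : IsForcingOrder 𝕄 le) (ht : DefinableTerm 𝕄 t)
    (h : Definable 𝕄 fun v => A (v 0) fun n => v (n + 1)) :
    Definable 𝕄 fun v => ∃ q, le q (t v) ∧ A q v :=
  (Definable.ex (A := fun q v => le q (t v) ∧ A q v)
    ((Definable₂.comp hle.definable (.var 0) ht.shift).and h)).congr fun _ _ =>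
      exists_congr fun _ => and_iff_right_of_imp fun hq => hle.mem_M hq.1

lemma IsForcingOrder.definable_forall_le (hle : IsForcingOrder 𝕄 le) (ht : DefinableTerm 𝕄 t)
    (h : Definable 𝕄 fun v => A (v 0) fun n => v (n + 1)) :
    Definable 𝕄 fun v => ∀ q, le q (t v) → A q v :=
  (hle.definable_exists_le (A := fun q v => ¬ A q v) ht h.not).not.congr fun _ _ => by simp

lemma Definable.denseBelow (hle : IsForcingOrder 𝕄 le)
    (h : Definable 𝕄 fun v => A (v 0) fun n => v (n + 1)) :
    Definable 𝕄 fun v => DenseBelow le (v 0) fun r => A r fun n => v (n + 1) :=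
  hle.definable_forall_le (.var 0) <| hle.definable_exists_le (.var 0) <|
    h.rename fun | 0 => 0 | n + 1 => n + 3

lemma Definable₄.memClause (hle : IsForcingOrder 𝕄 le) (hS : Definable₄ 𝕄 S) :
    Definable₄ 𝕄 fun c => MemClause le (S c) :=
  .exists_pair_mem (.var 3) ((Definable₂.comp hle.definable (.var 3) (.var 0)).and
    (Definable₄.comp hS (.var 2) (.var 3) (.var 4) (.var 1)))

lemma Definable₃.memClause {S : ZFSet.{u} → ZFSet.{u} → ZFSet.{u} → Prop}
    (hle : IsForcingOrder 𝕄 le) (hS : Definable₃ 𝕄 S) : Definable₃ 𝕄 (MemClause le S) :=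
  Definable₄.comp (Definable₄.memClause (S := fun _ => S) hle
    (Definable₃.comp hS (.var 1) (.var 2) (.var 3))) (.var 0) (.var 0) (.var 1) (.var 2)

lemma Definable₄.subsetClause (hle : IsForcingOrder 𝕄 le) (hS : Definable₄ 𝕄 S) :
    Definable₄ 𝕄 fun c => SubsetClause le (S c) :=
  .forall_pair_mem (.var 2) <| hle.definable_forall_le (.var 3) <|
    (Definable₂.comp hle.definable (.var 0) (.var 1)).imp <| hle.definable_exists_le (.var 0) <|
      Definable₄.comp (hS.memClause hle) (.var 4) (.var 0) (.var 3) (.var 7)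

lemma Definable₄.eqClause (hle : IsForcingOrder 𝕄 le) (hS : Definable₄ 𝕄 S) :
    Definable₄ 𝕄 fun c => EqClause le (S c) :=
  .and (hS.subsetClause hle) <| Definable₄.comp
    (Definable₄.subsetClause (S := fun c r ρ' ρ => S c r ρ ρ') hle
      (Definable₄.comp hS (.var 0) (.var 1) (.var 3) (.var 2)))
    (.var 0) (.var 1) (.var 3) (.var 2)

end DefinableClauses

/-! ### Local solutions of the recursion -/

section LocalSolutions

variable {le : ZFSet.{u} → ZFSet.{u} → Prop}

/-- `S` satisfies the recursion for forced equality at names from `A` and `T`. -/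
def IsSolutionOn (le : ZFSet.{u} → ZFSet.{u} → Prop)
    (S : ZFSet.{u} → ZFSet.{u} → ZFSet.{u} → Prop) (A T : ZFSet.{u}) : Prop :=
  ∀ σ ∈ A, ∀ τ ∈ T, ∀ p, le p p → (S p σ τ ↔ EqClause le S p σ τ)

section

variable {S : ZFSet.{u} → ZFSet.{u} → ZFSet.{u} → Prop} {A T p σ τ : ZFSet.{u}}

lemma IsSolutionOn.iff_forcesEq (hle : IsForcingOrder 𝕄 le) (hA : A.IsTransitive)
    (hT : T.IsTransitive) (hS : IsSolutionOn le S A T) (hσ : σ ∈ A) (hτ : τ ∈ T) (hp : le p p) :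
    S p σ τ ↔ forcesEq le p σ τ := by
  induction σ using name_induction generalizing τ p with
  | h σ ih =>
    rw [hS σ hσ τ hτ p hp, forcesEq_iff]
    exact eqClause_congr fun r q hr ρ a hρ ρ' b hρ' =>
      ih ρ a hρ (mem_of_pair_mem_of_isTransitive hA hσ hρ).1
        (mem_of_pair_mem_of_isTransitive hT hτ hρ').1 (hle.refl hr)

lemma IsSolutionOn.of_iff_forcesEq (hle : IsForcingOrder 𝕄 le) (hA : A.IsTransitive)
    (hT : T.IsTransitive)
    (hS : ∀ σ ∈ A, ∀ τ ∈ T, ∀ p, le p p → (S p σ τ ↔ forcesEq le p σ τ)) :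
    IsSolutionOn le S A T := fun σ hσ τ hτ p hp => by
  rw [hS σ hσ τ hτ p hp, forcesEq_iff]
  exact eqClause_congr fun r q hr ρ a hρ ρ' b hρ' =>
    (hS ρ (mem_of_pair_mem_of_isTransitive hA hσ hρ).1 ρ'
      (mem_of_pair_mem_of_isTransitive hT hτ hρ').1 r (hle.refl hr)).symm

end

variable {S : ZFSet.{u} → ZFSet.{u} → ZFSet.{u} → ZFSet.{u} → Prop} {A T c p ρ σ τ : ZFSet.{u}}

/-- The code `c` yields a solution of the recursion at names from the transitive sets `A`
and `T`, where `S c` is the relation coded by `c`. -/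
structure IsLocalSolution (le : ZFSet.{u} → ZFSet.{u} → Prop)
    (S : ZFSet.{u} → ZFSet.{u} → ZFSet.{u} → ZFSet.{u} → Prop) (A T c : ZFSet.{u}) : Prop where
  left_transitive : A.IsTransitive
  right_transitive : T.IsTransitive
  isSolutionOn : IsSolutionOn le (S c) A T

/-- Some local solution coded in `M` applies to the names `σ` and `τ`. -/
def Covered (𝕄 : GBModel.{u}) (le : ZFSet.{u} → ZFSet.{u} → Prop)
    (S : ZFSet.{u} → ZFSet.{u} → ZFSet.{u} → ZFSet.{u} → Prop) (σ τ : ZFSet.{u}) : Prop :=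
  ∃ A ∈ 𝕄.M, ∃ T ∈ 𝕄.M, ∃ c ∈ 𝕄.M, IsLocalSolution le S A T c ∧ σ ∈ A ∧ τ ∈ T

/-- Some local solution coded in `M` applies to `σ` and `τ` and holds at `p`, `σ`, `τ`. -/
def Glued (𝕄 : GBModel.{u}) (le : ZFSet.{u} → ZFSet.{u} → Prop)
    (S : ZFSet.{u} → ZFSet.{u} → ZFSet.{u} → ZFSet.{u} → Prop) (p σ τ : ZFSet.{u}) : Prop :=
  ∃ A ∈ 𝕄.M, ∃ T ∈ 𝕄.M, ∃ c ∈ 𝕄.M, IsLocalSolution le S A T c ∧ σ ∈ A ∧ τ ∈ T ∧ S c p σ τ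

lemma Covered.of_mem (h : Covered 𝕄 le S σ τ) (hρ : ρ ∈ σ) : Covered 𝕄 le S ρ τ := by
  obtain ⟨A, hA, T, hT, c, hc, hsol, hσ, hτ⟩ := h
  exact ⟨A, hA, T, hT, c, hc, hsol, hsol.left_transitive σ hσ hρ, hτ⟩

lemma Covered.glued_iff (hle : IsForcingOrder 𝕄 le) (h : Covered 𝕄 le S σ τ) (hp : le p p) :
    Glued 𝕄 le S p σ τ ↔ forcesEq le p σ τ := by
  have heq {A T c} (hsol : IsLocalSolution le S A T c) (hσ : σ ∈ A) (hτ : τ ∈ T) :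
      S c p σ τ ↔ forcesEq le p σ τ :=
    hsol.isSolutionOn.iff_forcesEq hle hsol.left_transitive hsol.right_transitive hσ hτ hp
  constructor
  · rintro ⟨A, -, T, -, c, -, hsol, hσ, hτ, hS⟩
    exact (heq hsol hσ hτ).1 hS
  · obtain ⟨A, hA, T, hT, c, hc, hsol, hσ, hτ⟩ := h
    exact fun hp => ⟨A, hA, T, hT, c, hc, hsol, hσ, hτ, (heq hsol hσ hτ).2 hp⟩

lemma definable_isTransitive : Definable₁ 𝕄 ZFSet.IsTransitive :=
  Definable₂.closedUnder (K := fun x N => x ∈ N) (.mem 0 1)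

lemma definable_isSolutionOn (hle : IsForcingOrder 𝕄 le) (hS : Definable₄ 𝕄 S) :
    Definable₃ 𝕄 fun A T c => IsSolutionOn le (S c) A T := by
  have hall : Definable₃ 𝕄 fun A T c => ∀ σ ∈ A, ∀ τ ∈ T, ∀ p ∈ 𝕄.M, le p p →
      (S c p σ τ ↔ EqClause le (S c) p σ τ) :=
    .forall_mem (.var 0) <| .forall_mem (.var 2) <| .all <|
      (Definable₂.comp hle.definable (.var 0) (.var 0)).imp <|
        (Definable₄.comp hS (.var 5) (.var 0) (.var 2) (.var 1)).iff
          (Definable₄.comp (hS.eqClause hle) (.var 5) (.var 0) (.var 2) (.var 1))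
  exact hall.congr fun _ _ => forall₄_congr fun _ _ _ _ => forall_congr' fun _ =>
    ⟨fun h hp => h (hle.mem_M hp) hp, fun h _ => h⟩

lemma definable_isLocalSolution (hle : IsForcingOrder 𝕄 le) (hS : Definable₄ 𝕄 S) :
    Definable₃ 𝕄 (IsLocalSolution le S) :=
  ((Definable₁.comp definable_isTransitive (.var 0)).and
    ((Definable₁.comp definable_isTransitive (.var 1)).and
      (definable_isSolutionOn hle hS))).congr fun _ _ =>
    ⟨fun ⟨hA, hT, h⟩ => ⟨hA, hT, h⟩, fun ⟨hA, hT, h⟩ => ⟨hA, hT, h⟩⟩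

lemma definable_covered (hle : IsForcingOrder 𝕄 le) (hS : Definable₄ 𝕄 S) :
    Definable₂ 𝕄 (Covered 𝕄 le S) :=
  .ex <| .ex <| .ex <| .and
    (Definable₃.comp (definable_isLocalSolution hle hS) (.var 2) (.var 1) (.var 0)) <|
    (Definable.mem 3 2).and (.mem 4 1)

lemma definable_glued (hle : IsForcingOrder 𝕄 le) (hS : Definable₄ 𝕄 S) :
    Definable₃ 𝕄 (Glued 𝕄 le S) :=
  .ex <| .ex <| .ex <| .and
    (Definable₃.comp (definable_isLocalSolution hle hS) (.var 2) (.var 1) (.var 0)) <|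
    (Definable.mem 4 2).and <| (Definable.mem 5 1).and
      (Definable₄.comp hS (.var 0) (.var 3) (.var 4) (.var 5))

lemma definable_forcesEq_of_covered (hle : IsForcingOrder 𝕄 le) (hS : Definable₄ 𝕄 S)
    (h : ∀ σ ∈ 𝕄.M, ∀ τ ∈ 𝕄.M, Covered 𝕄 le S σ τ) : Definable₃ 𝕄 (forcesEq le) := by
  have hglued : Definable₃ 𝕄 fun p σ τ => ∀ q, le q p → Glued 𝕄 le S q σ τ :=
    hle.definable_forall_le (.var 0)
      (Definable₃.comp (definable_glued hle hS) (.var 0) (.var 2) (.var 3))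
  refine hglued.congr fun v hv => ?_
  have hiff {q} (hq : le q (v 0)) :=
    (h _ (hv 1) _ (hv 2)).glued_iff hle (hle.refl hq)
  exact ⟨fun hall => forcesEq_of_dense hle fun q hq => ⟨q, hle.refl hq, (hiff hq).1 (hall q hq)⟩,
    fun heq q hq => (hiff hq).2 (forcesEq_mono hle hq heq)⟩

end LocalSolutions

/-! ### Set forcing -/

section SetForcing

variable {le : ZFSet.{u} → ZFSet.{u} → Prop} {Q T : ZFSet.{u}}

/-- The ternary relation coded by the set `R`. -/
def Coded (R p σ τ : ZFSet.{u}) : Prop := p.pair (σ.pair τ) ∈ R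

lemma definable_coded : Definable₄ 𝕄 Coded :=
  .mem_term (.pair (.var 1) (.pair (.var 2) (.var 3))) (.var 0)

lemma exists_coded {S : ZFSet.{u} → ZFSet.{u} → ZFSet.{u} → Prop} (hS : Definable₃ 𝕄 S)
    {A : ZFSet.{u}} (hQ : Q ∈ 𝕄.M) (hA : A ∈ 𝕄.M) (hT : T ∈ 𝕄.M) :
    ∃ R ∈ 𝕄.M, ∀ p ∈ Q, ∀ σ ∈ A, ∀ τ ∈ T, (Coded R p σ τ ↔ S p σ τ) := by
  obtain ⟨B, hB, hAT⟩ := GBModel.exists_prod_subset hA hT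
  obtain ⟨D, hD, hQB⟩ := GBModel.exists_prod_subset hQ hB
  obtain ⟨R, hR, hmem⟩ := GBModel.exists_sep
    (A := fun x => S (fstZ x) (fstZ (sndZ x)) (sndZ (sndZ x)))
    (Definable₃.comp hS (.fst (.var 0)) (.fst (.snd (.var 0))) (.snd (.snd (.var 0)))) hD
  refine ⟨R, hR, fun p hp σ hσ τ hτ => ?_⟩
  rw [Coded, hmem, and_iff_right (hQB p hp _ (hAT σ hσ τ hτ))]
  simp only [fstZ_pair, sndZ_pair]

lemma covered_of_forall_mem_covered (hle : IsForcingOrder 𝕄 le) (hQ : Q ∈ 𝕄.M)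
    (hleQ : ∀ p q, le p q → p ∈ Q) (hT : T ∈ 𝕄.M) (htrans : T.IsTransitive) {σ τ : ZFSet.{u}}
    (hσ : σ ∈ T) (hτ : τ ∈ T) (h : ∀ ρ ∈ σ, ∀ τ ∈ T, Covered 𝕄 le Coded ρ τ) :
    Covered 𝕄 le Coded σ τ := by
  obtain ⟨A, hA, hmem⟩ := GBModel.exists_sep
    (A := fun y => ∀ ρ ∈ y, ∀ τ ∈ T, Covered 𝕄 le Coded ρ τ)
    (.forall_mem (.var 0) (.forall_mem (.const hT)
      (Definable₂.comp (definable_covered hle definable_coded) (.var 1) (.var 0)))) hT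
  have hAtrans : A.IsTransitive := fun y hy z hz => by
    obtain ⟨hyT, hcov⟩ := (hmem y).1 hy
    exact (hmem z).2 ⟨htrans y hyT hz, fun ρ hρ τ hτ => (hcov z hz τ hτ).of_mem hρ⟩
  have hdef : Definable₃ 𝕄 (EqClause le (Glued 𝕄 le Coded)) :=
    Definable₄.comp (Definable₄.eqClause (S := fun _ => Glued 𝕄 le Coded) hle
      (Definable₃.comp (definable_glued hle definable_coded) (.var 1) (.var 2) (.var 3)))
      (.var 0) (.var 0) (.var 1) (.var 2)
  obtain ⟨R, hR, hcoded⟩ := exists_coded hdef hQ hA hT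
  refine ⟨A, hA, T, hT, R, hR, ⟨hAtrans, htrans, ?_⟩, (hmem σ).2 ⟨hσ, h⟩, hτ⟩
  refine .of_iff_forcesEq hle hAtrans htrans fun σ hσ τ hτ p hp => ?_
  rw [hcoded p (hleQ p p hp) σ hσ τ hτ, forcesEq_iff]
  refine eqClause_congr fun r q hr ρ a hρ ρ' b hρ' => ?_
  have hρρ' : Covered 𝕄 le Coded ρ ρ' :=
    (((hmem σ).1 hσ).2 _ hρ ρ' (mem_of_pair_mem_of_isTransitive htrans hτ hρ').1).of_mem
      (ZFSet.mem_pair.2 (.inl rfl)) |>.of_mem (ZFSet.mem_singleton.2 rfl)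
  exact hρρ'.glued_iff hle (hle.refl hr)

lemma covered_coded (hle : IsForcingOrder 𝕄 le) (hQ : Q ∈ 𝕄.M)
    (hleQ : ∀ p q, le p q → p ∈ Q) (hT : T ∈ 𝕄.M) (htrans : T.IsTransitive) {σ τ : ZFSet.{u}}
    (hσ : σ ∈ T) (hτ : τ ∈ T) : Covered 𝕄 le Coded σ τ := by
  induction σ using ZFSet.inductionOn generalizing τ with
  | _ σ ih =>
    exact covered_of_forall_mem_covered hle hQ hleQ hT htrans hσ hτ
      fun ρ hρ _ hτ => ih ρ hρ (htrans σ hσ hρ) hτ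

lemma exists_transitive_superset_pair {σ τ : ZFSet.{u}} (hσ : σ ∈ 𝕄.M) (hτ : τ ∈ 𝕄.M) :
    ∃ T ∈ 𝕄.M, T.IsTransitive ∧ σ ∈ T ∧ τ ∈ T := by
  obtain ⟨T, hT, hmem, htrans⟩ := exists_transitive_superset (𝕄.pair_mem σ hσ τ hτ)
  exact ⟨T, hT, htrans, htrans _ hmem (by simp), htrans _ hmem (by simp)⟩

lemma definable_forcesEq_of_set (hle : IsForcingOrder 𝕄 le) (hQ : Q ∈ 𝕄.M)
    (hleQ : ∀ p q, le p q → p ∈ Q) : Definable₃ 𝕄 (forcesEq le) :=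
  definable_forcesEq_of_covered hle definable_coded fun _ hσ _ hτ =>
    have ⟨_, hT, htrans, hσT, hτT⟩ := exists_transitive_superset_pair hσ hτ
    covered_coded hle hQ hleQ hT htrans hσT hτT

end SetForcing

/-! ### Projections -/

section Projections

variable {le le' : ZFSet.{u} → ZFSet.{u} → Prop} {f : ZFSet.{u} → ZFSet.{u}}
  {S S' : ZFSet.{u} → ZFSet.{u} → ZFSet.{u} → Prop} {p r ρ σ τ T : ZFSet.{u}}

/-- `f` is a projection from the order `le` to the order `le'` respecting the conditions that
belong to the set `T`. -/
structure IsOrderProjection (le le' : ZFSet.{u} → ZFSet.{u} → Prop) (T : ZFSet.{u})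
    (f : ZFSet.{u} → ZFSet.{u}) : Prop where
  map_le {p q : ZFSet.{u}} : le p q → le' (f p) (f q)
  exists_le {p q : ZFSet.{u}} : le p p → le' q (f p) → ∃ r, le r p ∧ le' (f r) q
  map_le_iff {p a : ZFSet.{u}} : a ∈ T → le p p → (le' (f p) a ↔ le p a)

namespace IsOrderProjection

lemma memClause_iff (hf : IsOrderProjection le le' T f) (hT : T.IsTransitive) (hτ : τ ∈ T)
    (hr : le r r) (h : ∀ ρ' b, ρ'.pair b ∈ τ → (S r ρ ρ' ↔ S' (f r) ρ ρ')) :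
    MemClause le S r ρ τ ↔ MemClause le' S' (f r) ρ τ :=
  exists₂_congr fun ρ' b => and_congr_right fun hb => and_congr
    (hf.map_le_iff (mem_of_pair_mem_of_isTransitive hT hτ hb).2 hr).symm (h ρ' b hb)

lemma subsetClause_iff (hle : IsForcingOrder 𝕄 le) (hle' : IsForcingOrder 𝕄 le')
    (hf : IsOrderProjection le le' T f) (hT : T.IsTransitive) (hσ : σ ∈ T) (hτ : τ ∈ T)
    (hp : le p p) (hmono : ∀ q r ρ ρ', le' q r → S' r ρ ρ' → S' q ρ ρ')
    (h : ∀ r, le r r → ∀ ρ a, ρ.pair a ∈ σ → ∀ ρ' b, ρ'.pair b ∈ τ →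
      (S r ρ ρ' ↔ S' (f r) ρ ρ')) :
    SubsetClause le S p σ τ ↔ SubsetClause le' S' (f p) σ τ := by
  refine forall₃_congr fun ρ a hρ => ?_
  have ha : a ∈ T := (mem_of_pair_mem_of_isTransitive hT hσ hρ).2
  have hmem {r q} (hr : le r q) : MemClause le S r ρ τ ↔ MemClause le' S' (f r) ρ τ :=
    hf.memClause_iff hT hτ (hle.refl hr) (h r (hle.refl hr) ρ a hρ)
  constructor
  · intro hS q' hq'p hq'a
    obtain ⟨q, hqp, hqq'⟩ := hf.exists_le hp hq'p
    have hqa : le q a := (hf.map_le_iff ha (hle.refl hqp)).1 (hle'.trans hqq' hq'a)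
    obtain ⟨r, hrq, hr⟩ := hS q hqp hqa
    exact ⟨f r, hle'.trans (hf.map_le hrq) hqq', (hmem hrq).1 hr⟩
  · intro hS' q hqp hqa
    obtain ⟨r', hr'q, hr'⟩ :=
      hS' (f q) (hf.map_le hqp) ((hf.map_le_iff ha (hle.refl hqp)).2 hqa)
    obtain ⟨r, hrq, hrr'⟩ := hf.exists_le (hle.refl hqp) hr'q
    exact ⟨r, hrq, (hmem hrq).2 (hr'.mono hle' (fun ρ' => hmono _ _ ρ ρ' hrr') hrr')⟩

lemma forcesEq_iff_map (hle : IsForcingOrder 𝕄 le) (hle' : IsForcingOrder 𝕄 le')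
    (hf : IsOrderProjection le le' T f) (hT : T.IsTransitive) (hσ : σ ∈ T) (hτ : τ ∈ T)
    (hp : le p p) : forcesEq le p σ τ ↔ forcesEq le' (f p) σ τ := by
  induction σ using name_induction generalizing τ p with
  | h σ ih =>
    have hdom {r} (hr : le r r) {ρ a} (hρ : ρ.pair a ∈ σ) {ρ' b} (hρ' : ρ'.pair b ∈ τ) :
        forcesEq le r ρ ρ' ↔ forcesEq le' (f r) ρ ρ' :=
      ih ρ a hρ (mem_of_pair_mem_of_isTransitive hT hσ hρ).1
        (mem_of_pair_mem_of_isTransitive hT hτ hρ').1 hr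
    rw [forcesEq_iff, forcesEq_iff]
    exact and_congr
      (hf.subsetClause_iff hle hle' hT hσ hτ hp (fun _ _ _ _ => forcesEq_mono hle')
        fun r hr ρ a hρ ρ' b hρ' => hdom hr hρ hρ')
      (hf.subsetClause_iff hle hle' hT hτ hσ hp (fun _ _ _ _ => forcesEq_mono hle')
        fun r hr ρ' b hρ' ρ a hρ => hdom hr hρ hρ')

end IsOrderProjection

end Projections

/-! ### Forced equality for approachable class forcings -/

namespace ClassForcing

variable {F : ClassForcing.{u} 𝕄} {C : Set ZFSet.{u}}

/-- The ordering of `F` restricted to conditions in `C`. -/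
def leOn (F : ClassForcing.{u} 𝕄) (C : Set ZFSet.{u}) (p q : ZFSet.{u}) : Prop :=
  p ∈ C ∧ q ∈ C ∧ F.le p q

lemma leOn_refl (hC : C ⊆ F.P) {p : ZFSet.{u}} (hp : p ∈ C) : F.leOn C p p :=
  ⟨hp, hp, F.le_refl p (hC hp)⟩

lemma isForcingOrder_leOn (hC : C ∈ 𝕄.Cls) (hCP : C ⊆ F.P) : IsForcingOrder 𝕄 (F.leOn C) where
  definable := by
    refine ((Definable.cls 0 hC).and ((Definable.cls 1 hC).and
      (.cls_term F.le_cls (.pair (.var 0) (.var 1))))).congr fun v _ =>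
      and_congr_right fun h0 => and_congr_right fun h1 => ⟨?_, fun h => ?_⟩
    · rintro ⟨p, -, q, -, hpq, e⟩
      obtain ⟨h0, h1⟩ := ZFSet.pair_inj.1 e
      rwa [h0, h1]
    · exact ⟨_, hCP h0, _, hCP h1, h, rfl⟩
  mem_M h := 𝕄.classes_sub C hC h.1
  refl h := leOn_refl hCP h.1
  trans h h' := ⟨h.1, h'.2.1, F.le_trans _ _ _ h.2.2 h'.2.2⟩

lemma isForcingOrder (F : ClassForcing.{u} 𝕄) : IsForcingOrder 𝕄 (F.leOn F.P) :=
  F.isForcingOrder_leOn F.P_cls subset_rfl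

end ClassForcing

section Approachable

variable {F : ClassForcing.{u} 𝕄}

lemma IsProjectionResp.isOrderProjection {Q X : Set ZFSet.{u}} {T : ZFSet.{u}}
    {f : ZFSet.{u} → ZFSet.{u}} (hf : IsProjectionResp F.P F.le F.one Q X f) (hQ : Q ⊆ F.P)
    (hXQ : X ⊆ Q) (hT : ∀ a ∈ T, a ∈ F.P → a ∈ X) :
    IsOrderProjection (F.leOn F.P) (F.leOn Q) T f where
  map_le {p q} h := ⟨hf.1 p h.1, hf.1 q h.2.1, hf.2.2.1 p h.1 q h.2.1 h.2.2⟩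
  exists_le {p q} hp hq := by
    obtain ⟨r, hr, hrp, hrq⟩ := hf.2.2.2.1 p hp.1 q hq.1 hq.2.2
    exact ⟨r, ⟨hr, hp.1, hrp⟩, hf.1 r hr, hq.1, hrq⟩
  map_le_iff {p a} ha hp := by
    refine ⟨fun ⟨_, haQ, h⟩ => ⟨hp.1, hQ haQ, ?_⟩, fun ⟨_, haP, h⟩ => ?_⟩
    · exact hf.2.2.2.2.1 a (hT a ha (hQ haQ)) p hp.1 h
    · have haX := hT a ha haP
      refine ⟨hf.1 p hp.1, hXQ haX, ?_⟩
      simpa only [hf.2.2.2.2.2 a haX] using hf.2.2.1 p hp.1 a haP h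

/-- The code `⟨X, y, R⟩` stands for the pullback of the relation coded by `R` along the section
`π_{X,y}` of the class `Pi`. -/
def Pullback (𝕄 : GBModel.{u}) (Pi : Set ZFSet.{u}) (c p σ τ : ZFSet.{u}) : Prop :=
  ∃ w ∈ 𝕄.M, (fstZ c).pair ((fstZ (sndZ c)).pair (p.pair w)) ∈ Pi ∧ Coded (sndZ (sndZ c)) w σ τ

lemma definable_pullback {Pi : Set ZFSet.{u}} (hPi : Pi ∈ 𝕄.Cls) :
    Definable₄ 𝕄 (Pullback 𝕄 Pi) :=
  .ex (.and (.cls_term hPi (.pair (.fst (.var 1)) (.pair (.fst (.snd (.var 1)))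
    (.pair (.var 2) (.var 0))))) (Definable₄.comp definable_coded (.snd (.snd (.var 1)))
      (.var 0) (.var 3) (.var 4)))

lemma pullback_pair_iff {Pi : Set ZFSet.{u}} {X y R p σ τ : ZFSet.{u}} {f : ZFSet.{u} → ZFSet.{u}}
    (hfM : f p ∈ 𝕄.M) (hf : ∀ w, f p = w ↔ X.pair (y.pair (p.pair w)) ∈ Pi) :
    Pullback 𝕄 Pi (X.pair (y.pair R)) p σ τ ↔ Coded R (f p) σ τ := by
  simp only [Pullback, fstZ_pair, sndZ_pair, ← hf]
  exact ⟨fun ⟨_, _, hw, h⟩ => hw ▸ h, fun h => ⟨f p, hfM, rfl, h⟩⟩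

lemma covered_pullback {Pi : Set ZFSet.{u}} {T X y Q : ZFSet.{u}} {f : ZFSet.{u} → ZFSet.{u}}
    (hT : T ∈ 𝕄.M) (htrans : T.IsTransitive) (hX : X ∈ 𝕄.M) (hy : y ∈ 𝕄.M) (hQ : Q ∈ 𝕄.M)
    (hQP : Q.toSet ⊆ F.P) (hf : ∀ p ∈ F.P, ∀ w, f p = w ↔ X.pair (y.pair (p.pair w)) ∈ Pi)
    (hproj : IsOrderProjection (F.leOn F.P) (F.leOn Q.toSet) T f)
    {σ τ : ZFSet.{u}} (hσ : σ ∈ T) (hτ : τ ∈ T) :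
    Covered 𝕄 (F.leOn F.P) (Pullback 𝕄 Pi) σ τ := by
  have hle := F.isForcingOrder
  have hleQ := F.isForcingOrder_leOn (𝕄.sets_are_classes Q hQ) hQP
  obtain ⟨R, hR, hcoded⟩ :=
    exists_coded (definable_forcesEq_of_set hleQ hQ fun _ _ h => h.1) hQ hT hT
  refine ⟨T, hT, T, hT, X.pair (y.pair R), GBModel.opair_mem hX (GBModel.opair_mem hy hR),
    ⟨htrans, htrans, ?_⟩, hσ, hτ⟩
  refine .of_iff_forcesEq hle htrans htrans fun σ hσ τ hτ p hp => ?_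
  have hfp : f p ∈ Q := (hproj.map_le hp).1
  rw [hproj.forcesEq_iff_map hle hleQ htrans hσ hτ hp, ← hcoded (f p) hfp σ hσ τ hτ]
  exact pullback_pair_iff (𝕄.transitive Q hQ _ hfp) (hf p hp.1)

lemma definable_forcesEq_of_approachable (h : ApproachableByProjections 𝕄 F) :
    Definable₃ 𝕄 (forcesEq (F.leOn F.P)) := by
  obtain ⟨Pi, hPi, hsection⟩ := h
  refine definable_forcesEq_of_covered F.isForcingOrder
    (definable_pullback hPi) fun σ hσ τ hτ => ?_
  obtain ⟨T, hT, htrans, hσT, hτT⟩ := exists_transitive_superset_pair hσ hτ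
  obtain ⟨X, hX, hXmem⟩ := 𝕄.separation F.P F.P_cls T hT
  obtain ⟨y, hy, Q, hQ, hQP, hXQ, -, f, hf, hproj⟩ := hsection X hX fun x hx => ((hXmem x).1 hx).2
  exact covered_pullback hT htrans hX hy hQ hQP hf
    (hproj.isOrderProjection hQP hXQ fun a ha haP => (hXmem a).2 ⟨ha, haP⟩) hσT hτT

end Approachable

/-! ### Names and their evaluation -/

section Names

variable {C G : Set ZFSet.{u}} {σ x : ZFSet.{u}}

lemma isName_iff : IsName C σ ↔ ∀ x ∈ σ, ∃ τ p, x = τ.pair p ∧ p ∈ C ∧ IsName C τ := by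
  unfold IsName
  rw [IsNameAux]
  refine forall₂_congr fun x hx => exists₂_congr fun τ p => and_congr_right fun e =>
    and_congr_right fun _ => exists_prop_of_true ?_
  exact rank_lt_of_pair_mem (e ▸ hx)

lemma isName_empty : IsName C (∅ : ZFSet.{u}) :=
  isName_iff.2 fun x hx => absurd hx (ZFSet.notMem_empty x)

lemma mem_zimage {f : ZFSet.{u} → ZFSet.{u}} {y : ZFSet.{u}} : y ∈ zimage f x ↔ ∃ z ∈ x, f z = y :=
  @ZFSet.mem_image f (Classical.allZFSetDefinable _) x y

lemma mem_nameEval : x ∈ nameEval G σ ↔ ∃ τ p, p ∈ G ∧ τ.pair p ∈ σ ∧ nameEval G τ = x := by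
  have hdom {τ p : ZFSet.{u}} (h : τ.pair p ∈ σ) : τ ∈ ZFSet.sUnion (ZFSet.sUnion σ) :=
    ZFSet.mem_sUnion_of_mem (ZFSet.mem_singleton.2 rfl)
      (ZFSet.mem_sUnion_of_mem (ZFSet.mem_pair.2 (.inl rfl)) h)
  unfold nameEval
  rw [nameEvalAux, mem_zimage]
  simp only [ZFSet.mem_sep]
  constructor
  · rintro ⟨τ, ⟨-, p, hp, h⟩, rfl⟩
    exact ⟨τ, p, hp, h, by rw [dif_pos (rank_lt_of_pair_mem h)]⟩
  · rintro ⟨τ, p, hp, h, rfl⟩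
    exact ⟨τ, ⟨hdom h, p, hp, h⟩, dif_pos (rank_lt_of_pair_mem h)⟩

lemma nameEval_empty : nameEval G (∅ : ZFSet.{u}) = ∅ := by
  refine (ZFSet.eq_empty _).2 fun x hx => ?_
  obtain ⟨τ, p, -, h, -⟩ := mem_nameEval.1 hx
  exact ZFSet.notMem_empty _ h

lemma nameEval_update (s : ℕ → ZFSet.{u}) (i : ℕ) :
    (fun n => nameEval G (Function.update s i σ n)) =
      Function.update (fun n => nameEval G (s n)) i (nameEval G σ) :=
  Function.comp_update (nameEval G) s i σ

/-- `x` is a pair of an element of `N` and an element of `C`. -/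
def IsPairIn (C : Set ZFSet.{u}) (x N : ZFSet.{u}) : Prop :=
  ∃ ρ ∈ N, ∃ p ∈ C, x = ρ.pair p

lemma definable_isPairIn (hC : C ∈ 𝕄.Cls) : Definable₂ 𝕄 (IsPairIn C) :=
  .exists_mem (.var 1) (.exists_mem_cls hC (.eq_term (.var _) (.pair (.var _) (.var _))))

lemma isName_of_mem_closedUnder {N : ZFSet.{u}} (hN : ClosedUnder (IsPairIn C) N) (hσ : σ ∈ N) :
    IsName C σ := by
  induction σ using name_induction with
  | h σ ih =>
    refine isName_iff.2 fun x hx => ?_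
    obtain ⟨ρ, hρ, p, hp, rfl⟩ := hN σ hσ x hx
    exact ⟨ρ, p, rfl, hp, ih ρ p hx hρ⟩

lemma IsName.exists_closedUnder (hC : C ∈ 𝕄.Cls) (hσM : σ ∈ 𝕄.M) (hσ : IsName C σ) :
    ∃ N ∈ 𝕄.M, σ ∈ N ∧ ClosedUnder (IsPairIn C) N := by
  induction σ using name_induction with
  | h σ ih =>
    refine exists_closedUnder_of_forall_mem (definable_isPairIn hC)
      (fun _ _ _ hsub ⟨ρ, hρ, h⟩ => ⟨ρ, hsub hρ, h⟩) hσM fun x hx => ?_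
    obtain ⟨ρ, p, rfl, hp, hρ⟩ := isName_iff.1 hσ x hx
    have hρM := (GBModel.mem_of_opair_mem (𝕄.transitive _ hσM _ hx)).1
    obtain ⟨N, hN, hρN, hclosed⟩ := ih ρ p hx hρM hρ
    exact ⟨N, hN, ⟨ρ, hρN, p, hp, rfl⟩, hclosed⟩

lemma definable_isName (hC : C ∈ 𝕄.Cls) : Definable₁ 𝕄 (IsName C) := by
  have hex : Definable₁ 𝕄 fun σ => ∃ N ∈ 𝕄.M, σ ∈ N ∧ ClosedUnder (IsPairIn C) N :=
    .ex (.and (.mem 1 0) (definable_isPairIn hC).closedUnder)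
  exact hex.congr fun v hv => ⟨fun ⟨_, _, hσ, hN⟩ => isName_of_mem_closedUnder hN hσ,
    IsName.exists_closedUnder hC (hv 0)⟩

/-- The class of names in `M` for the forcing `F`. -/
def ClassForcing.names (F : ClassForcing.{u} 𝕄) : Set ZFSet.{u} := {σ | σ ∈ 𝕄.M ∧ IsName F.P σ}

lemma ClassForcing.names_mem_Cls {F : ClassForcing.{u} 𝕄} : F.names ∈ 𝕄.Cls :=
  (definable_isName F.P_cls).setOf_mem_Cls

end Names

/-! ### Generic filters -/

/-- The conditions of `F` with the reversed order: stronger conditions are larger, so that filters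
become ideals and dense classes become cofinal sets. -/
structure ClassForcing.Condition (F : ClassForcing.{u} 𝕄) where
  val : ZFSet.{u}
  mem : val ∈ F.P

instance (F : ClassForcing.{u} 𝕄) : Preorder F.Condition where
  le p q := F.le q.val p.val
  le_refl p := F.le_refl p.val p.mem
  le_trans p q r hpq hqr := F.le_trans r.val q.val p.val hqr hpq

lemma ClassForcing.isFilterOn_image_val {F : ClassForcing.{u} 𝕄} (I : Order.Ideal F.Condition) :
    IsFilterOn F.P F.le (Condition.val '' (I : Set F.Condition)) := by
  refine ⟨?_, I.nonempty.image _, ?_, ?_⟩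
  · rintro _ ⟨q, -, rfl⟩
    exact q.mem
  · rintro _ ⟨q, hq, rfl⟩ r hr hqr
    exact ⟨⟨r, hr⟩, I.lower (show (⟨r, hr⟩ : F.Condition) ≤ q from hqr) hq, rfl⟩
  · rintro _ ⟨q, hq, rfl⟩ _ ⟨r, hr, rfl⟩
    obtain ⟨s, hs, hqs, hrs⟩ := I.directed q hq r hr
    exact ⟨s.val, ⟨s, hs, rfl⟩, hqs, hrs⟩

lemma ClassForcing.exists_isGeneric {F : ClassForcing.{u} 𝕄} {p : ZFSet.{u}} (hp : p ∈ F.P) :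
    ∃ G, IsGeneric 𝕄 F.P F.le G ∧ p ∈ G := by
  let denseClasses : Set (Set ZFSet.{u}) := {D | D ∈ 𝕄.Cls ∧ DenseIn F.P F.le D}
  have : Countable denseClasses := (𝕄.countable_Cls.mono fun _ hD => hD.1).to_subtype
  let : Encodable denseClasses := .ofCountable _
  let cofinal (D : denseClasses) : Order.Cofinal F.Condition :=
    ⟨{q | q.val ∈ D.1}, fun q =>
      have ⟨r, hr, hrq⟩ := D.2.2.2 q.val q.mem
      ⟨⟨r, D.2.2.1 hr⟩, hr, hrq⟩⟩
  let p' : F.Condition := ⟨p, hp⟩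
  refine ⟨Condition.val '' (Order.idealOfCofinals p' cofinal : Set F.Condition),
    ⟨isFilterOn_image_val _, fun D hD hdense => ?_⟩, p', Order.mem_idealOfCofinals _ _, rfl⟩
  obtain ⟨q, hqD, hqI⟩ := Order.cofinal_meets_idealOfCofinals p' cofinal ⟨D, hD, hdense⟩
  exact ⟨q.val, ⟨q, hqI, rfl⟩, hqD⟩

namespace IsGeneric

variable {F : ClassForcing.{u} 𝕄} {G : Set ZFSet.{u}} {p q : ZFSet.{u}} {A : ZFSet.{u} → Prop}

lemma mem_of_le (hG : IsGeneric 𝕄 F.P F.le G) (hp : p ∈ G) (hpq : F.leOn F.P p q) : q ∈ G :=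
  hG.1.2.2.1 p hp q hpq.2.1 hpq.2.2

lemma exists_common_le (hG : IsGeneric 𝕄 F.P F.le G) (hp : p ∈ G) (hq : q ∈ G) :
    ∃ r ∈ G, F.leOn F.P r p ∧ F.leOn F.P r q := by
  obtain ⟨r, hr, hrp, hrq⟩ := hG.1.2.2.2 p hp q hq
  have hGP := hG.1.1
  exact ⟨r, hr, ⟨hGP hr, hGP hp, hrp⟩, hGP hr, hGP hq, hrq⟩

lemma exists_mem_or_forall_le_not (hG : IsGeneric 𝕄 F.P F.le G) (hA : Definable₁ 𝕄 A) :
    (∃ p ∈ G, A p) ∨ ∃ p ∈ G, ∀ q, F.leOn F.P q p → ¬ A q := by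
  have hle := F.isForcingOrder
  have hdef : Definable₁ 𝕄 fun p => p ∈ F.P ∧ (A p ∨ ∀ q, F.leOn F.P q p → ¬ A q) :=
    (Definable.cls 0 F.P_cls).and
      (hA.or (hle.definable_forall_le (.var 0) (Definable₁.comp hA (.var 0)).not))
  have hdense : DenseIn F.P F.le
      {p | p ∈ 𝕄.M ∧ p ∈ F.P ∧ (A p ∨ ∀ q, F.leOn F.P q p → ¬ A q)} := by
    refine ⟨fun p hp => hp.2.1, fun p hp => ?_⟩
    by_cases h : ∃ q, F.leOn F.P q p ∧ A q
    · obtain ⟨q, hqp, hq⟩ := h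
      exact ⟨q, ⟨hle.mem_M hqp, hqp.1, .inl hq⟩, hqp.2.2⟩
    · exact ⟨p, ⟨𝕄.classes_sub _ F.P_cls hp, hp, .inr fun q hqp hq => h ⟨q, hqp, hq⟩⟩,
        F.le_refl p hp⟩
  obtain ⟨p, hpG, -, -, hp⟩ := hG.2 _ hdef.setOf_mem_Cls hdense
  exact hp.imp (fun h => ⟨p, hpG, h⟩) fun h => ⟨p, hpG, h⟩

lemma exists_mem_of_denseBelow (hG : IsGeneric 𝕄 F.P F.le G) (hA : Definable₁ 𝕄 A) (hp : p ∈ G)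
    (h : DenseBelow (F.leOn F.P) p A) : ∃ q ∈ G, A q := by
  refine (hG.exists_mem_or_forall_le_not hA).resolve_right fun ⟨q, hq, hnot⟩ => ?_
  obtain ⟨r, -, hrp, hrq⟩ := hG.exists_common_le hp hq
  obtain ⟨s, hsr, hs⟩ := h r hrp
  exact hnot s (F.isForcingOrder.trans hsr hrq) hs

lemma exists_denseBelow_iff (hG : IsGeneric 𝕄 F.P F.le G) (hA : Definable₁ 𝕄 A)
    (hmono : ∀ p q, F.leOn F.P q p → A p → A q) :
    (∃ p ∈ G, DenseBelow (F.leOn F.P) p A) ↔ ∃ p ∈ G, A p :=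
  ⟨fun ⟨_, hp, h⟩ => hG.exists_mem_of_denseBelow hA hp h, fun ⟨p, hp, h⟩ =>
    ⟨p, hp, fun q hqp => ⟨q, F.leOn_refl subset_rfl hqp.1, hmono p q hqp h⟩⟩⟩

end IsGeneric

/-! ### The truth lemma -/

section Atomic

namespace IsGeneric

variable {F : ClassForcing.{u} 𝕄} {G : Set ZFSet.{u}} {ρ σ τ : ZFSet.{u}}
  {S : ZFSet.{u} → ZFSet.{u} → ZFSet.{u} → Prop}

lemma nameEval_mem_iff (hG : IsGeneric 𝕄 F.P F.le G)
    (hmono : ∀ p q ρ', F.leOn F.P q p → S p ρ ρ' → S q ρ ρ')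
    (hS : ∀ ρ' b, ρ'.pair b ∈ τ → (nameEval G ρ = nameEval G ρ' ↔ ∃ p ∈ G, S p ρ ρ')) :
    nameEval G ρ ∈ nameEval G τ ↔ ∃ p ∈ G, MemClause (F.leOn F.P) S p ρ τ := by
  rw [mem_nameEval]
  constructor
  · rintro ⟨ρ', b, hb, hρ', heq⟩
    obtain ⟨p, hp, hSp⟩ := (hS ρ' b hρ').1 heq.symm
    obtain ⟨r, hr, hrp, hrb⟩ := hG.exists_common_le hp hb
    exact ⟨r, hr, ρ', b, hρ', hrb, hmono p r ρ' hrp hSp⟩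
  · rintro ⟨p, hp, ρ', b, hρ', hpb, hSp⟩
    exact ⟨ρ', b, hG.mem_of_le hp hpb, hρ', ((hS ρ' b hρ').2 ⟨p, hp, hSp⟩).symm⟩

lemma exists_subsetClause (hG : IsGeneric 𝕄 F.P F.le G) (hSdef : Definable₃ 𝕄 S)
    (hmono : ∀ p q ρ ρ', F.leOn F.P q p → S p ρ ρ' → S q ρ ρ') (hσ : σ ∈ 𝕄.M) (hτ : τ ∈ 𝕄.M)
    (hmem : ∀ ρ a, a ∈ G → ρ.pair a ∈ σ → ∃ p ∈ G, MemClause (F.leOn F.P) S p ρ τ) :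
    ∃ p ∈ G, SubsetClause (F.leOn F.P) S p σ τ := by
  let Refutes (p : ZFSet.{u}) : Prop := ∃ ρ a, ρ.pair a ∈ σ ∧ F.leOn F.P p a ∧
    ∀ r, F.leOn F.P r p → ¬ MemClause (F.leOn F.P) S r ρ τ
  have hrefutes : Definable₁ 𝕄 Refutes :=
    .exists_pair_mem (.const hσ) <|
      (Definable₂.comp F.isForcingOrder.definable (.var 2) (.var 0)).and <|
        F.isForcingOrder.definable_forall_le (.var 2) <|
          (Definable₃.comp (hSdef.memClause F.isForcingOrder) (.var 0) (.var 2) (.const hτ)).not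
  rcases hG.exists_mem_or_forall_le_not hrefutes with ⟨p, hp, ρ, a, hρ, hpa, hnot⟩ | ⟨p, hp, h⟩
  · obtain ⟨q, hq, hqτ⟩ := hmem ρ a (hG.mem_of_le hp hpa) hρ
    obtain ⟨r, -, hrp, hrq⟩ := hG.exists_common_le hp hq
    exact absurd (hqτ.mono F.isForcingOrder (hmono q r ρ · hrq) hrq) (hnot r hrp)
  · refine ⟨p, hp, fun ρ a hρ q hqp hqa => ?_⟩
    by_contra! hnot
    exact h q hqp ⟨ρ, a, hρ, hqa, hnot⟩

lemma nameEval_subset_iff (hG : IsGeneric 𝕄 F.P F.le G) (hSdef : Definable₃ 𝕄 S)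
    (hmono : ∀ p q ρ ρ', F.leOn F.P q p → S p ρ ρ' → S q ρ ρ') (hσ : σ ∈ 𝕄.M) (hτ : τ ∈ 𝕄.M)
    (hS : ∀ ρ a, ρ.pair a ∈ σ → ∀ ρ' b, ρ'.pair b ∈ τ →
      (nameEval G ρ = nameEval G ρ' ↔ ∃ p ∈ G, S p ρ ρ')) :
    nameEval G σ ⊆ nameEval G τ ↔ ∃ p ∈ G, SubsetClause (F.leOn F.P) S p σ τ := by
  have hmem_iff (ρ a) (hρ : ρ.pair a ∈ σ) := hG.nameEval_mem_iff (hmono · · ρ) (hS ρ a hρ)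
  constructor
  · exact fun hsub => hG.exists_subsetClause hSdef hmono hσ hτ fun ρ a ha hρ =>
      (hmem_iff ρ a hρ).1 (hsub (mem_nameEval.2 ⟨ρ, a, ha, hρ, rfl⟩))
  · rintro ⟨p, hp, hsub⟩ x hx
    obtain ⟨ρ, a, ha, hρ, rfl⟩ := mem_nameEval.1 hx
    have hρM := (GBModel.mem_of_opair_mem (𝕄.transitive _ hσ _ hρ)).1
    obtain ⟨q, hq, hqp, hqa⟩ := hG.exists_common_le hp ha
    refine (hmem_iff ρ a hρ).2 <| hG.exists_mem_of_denseBelow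
      (Definable₃.comp (hSdef.memClause F.isForcingOrder) (.var 0) (.const hρM) (.const hτ)) hq
      fun r hrq => ?_
    exact hsub ρ a hρ r (F.isForcingOrder.trans hrq hqp) (F.isForcingOrder.trans hrq hqa)

lemma nameEval_eq_iff (hG : IsGeneric 𝕄 F.P F.le G)
    (hEq : Definable₃ 𝕄 (forcesEq (F.leOn F.P))) (hσ : σ ∈ 𝕄.M) (hτ : τ ∈ 𝕄.M) :
    nameEval G σ = nameEval G τ ↔ ∃ p ∈ G, forcesEq (F.leOn F.P) p σ τ := by
  induction σ using name_induction generalizing τ with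
  | h σ ih =>
    have hmono (p q ρ ρ') (hqp : F.leOn F.P q p) (h : forcesEq (F.leOn F.P) p ρ ρ') :
        forcesEq (F.leOn F.P) q ρ ρ' := forcesEq_mono F.isForcingOrder hqp h
    have hdom (ρ a) (hρ : ρ.pair a ∈ σ) (ρ' b) (hρ' : ρ'.pair b ∈ τ) :
        nameEval G ρ = nameEval G ρ' ↔ ∃ p ∈ G, forcesEq (F.leOn F.P) p ρ ρ' :=
      ih ρ a hρ (GBModel.mem_of_opair_mem (𝕄.transitive _ hσ _ hρ)).1
        (GBModel.mem_of_opair_mem (𝕄.transitive _ hτ _ hρ')).1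
    have hsub := hG.nameEval_subset_iff hEq hmono hσ hτ hdom
    have hsup := hG.nameEval_subset_iff (S := fun r ρ' ρ => forcesEq (F.leOn F.P) r ρ ρ')
      (Definable₃.comp hEq (.var 0) (.var 2) (.var 1))
      (fun p q ρ' ρ => hmono p q ρ ρ') hτ hσ
      fun ρ' b hρ' ρ a hρ => eq_comm.trans (hdom ρ a hρ ρ' b hρ')
    rw [subset_antisymm_iff, hsub, hsup]
    constructor
    · rintro ⟨⟨p, hp, hστ⟩, q, hq, hτσ⟩
      obtain ⟨r, hr, hrp, hrq⟩ := hG.exists_common_le hp hq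
      exact ⟨r, hr, forcesEq_iff.2
        ⟨hστ.mono F.isForcingOrder hrp, hτσ.mono F.isForcingOrder hrq⟩⟩
    · rintro ⟨p, hp, h⟩
      obtain ⟨hστ, hτσ⟩ := forcesEq_iff.1 h
      exact ⟨⟨p, hp, hστ⟩, p, hp, hτσ⟩

end IsGeneric

end Atomic

/-- The syntactic forcing relation `p ⊩* φ(s)`, defined by recursion on `φ`; the assignment `s`
interprets the variables by names. -/
def ForcesStar (F : ClassForcing.{u} 𝕄) : EFormula → ZFSet.{u} → (ℕ → ZFSet.{u}) → Prop
  | .mem i j, p, s =>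
    DenseBelow (F.leOn F.P) p fun r =>
      MemClause (F.leOn F.P) (forcesEq (F.leOn F.P)) r (s i) (s j)
  | .eq i j, p, s => forcesEq (F.leOn F.P) p (s i) (s j)
  | .not φ, p, s => ∀ q, F.leOn F.P q p → ¬ ForcesStar F φ q s
  | .or φ ψ, p, s => DenseBelow (F.leOn F.P) p fun r => ForcesStar F φ r s ∨ ForcesStar F ψ r s
  | .ex i φ, p, s =>
    DenseBelow (F.leOn F.P) p fun r => ∃ σ ∈ F.names, ForcesStar F φ r (Function.update s i σ)

section ForcesStar

variable {F : ClassForcing.{u} 𝕄} {φ : EFormula} {p q : ZFSet.{u}} {s : ℕ → ZFSet.{u}}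

lemma ForcesStar.mono (hqp : F.leOn F.P q p) (h : ForcesStar F φ p s) : ForcesStar F φ q s :=
  match φ with
  | .mem _ _ | .or _ _ | .ex _ _ => DenseBelow.mono F.isForcingOrder hqp h
  | .eq _ _ => forcesEq_mono F.isForcingOrder hqp h
  | .not _ => fun r hrq => h r (F.isForcingOrder.trans hrq hqp)

lemma ForcesStar.of_dense (h : DenseBelow (F.leOn F.P) p fun r => ForcesStar F φ r s) :
    ForcesStar F φ p s :=
  match φ with
  | .mem _ _ | .or _ _ | .ex _ _ => DenseBelow.of_denseBelow F.isForcingOrder h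
  | .eq _ _ => forcesEq_of_dense F.isForcingOrder h
  | .not _ => fun q hqp hq =>
    have ⟨r, hrq, hr⟩ := h q hqp
    hr r (F.isForcingOrder.refl hrq) (hq.mono hrq)

lemma definable_exists_forcesStar_update
    (h : Definable 𝕄 fun v => ForcesStar F φ (v 0) fun n => v (n + 1)) (i : ℕ) :
    Definable 𝕄 fun v =>
      ∃ σ ∈ F.names, ForcesStar F φ (v 0) (Function.update (fun n => v (n + 1)) i σ) := by
  refine (h.exists_update F.names_mem_Cls (i + 1)).congr fun v _ => ?_
  simp only [Function.update_of_ne (Nat.succ_ne_zero i).symm]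
  exact Iff.of_eq <| congrArg _ <| funext fun σ => congrArg _ <| congrArg _ <|
    Function.update_comp_eq_of_injective v Nat.succ_injective i σ

lemma definable_forcesStar (hEq : Definable₃ 𝕄 (forcesEq (F.leOn F.P))) (φ : EFormula) :
    Definable 𝕄 fun v => ForcesStar F φ (v 0) fun n => v (n + 1) := by
  induction φ with
  | mem i j =>
    exact .denseBelow F.isForcingOrder
      (A := fun r s => MemClause (F.leOn F.P) (forcesEq (F.leOn F.P)) r (s i) (s j)) <|
      Definable₃.comp (hEq.memClause F.isForcingOrder) (.var 0) (.var (i + 1)) (.var (j + 1))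
  | eq i j => exact Definable₃.comp hEq (.var 0) (.var (i + 1)) (.var (j + 1))
  | not φ ih =>
    exact F.isForcingOrder.definable_forall_le (.var 0)
      (ih.not.rename fun | 0 => 0 | n + 1 => n + 2)
  | or φ ψ ihφ ihψ =>
    exact .denseBelow F.isForcingOrder (A := fun r s => ForcesStar F φ r s ∨ ForcesStar F ψ r s)
      (ihφ.or ihψ)
  | ex i φ ih =>
    exact .denseBelow F.isForcingOrder
      (A := fun r s => ∃ σ ∈ F.names, ForcesStar F φ r (Function.update s i σ))
      (definable_exists_forcesStar_update ih i)

lemma Definable.comp_const {B : ZFSet.{u} → (ℕ → ZFSet.{u}) → Prop}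
    (h : Definable 𝕄 fun v => B (v 0) fun n => v (n + 1)) (hs : ∀ n, s n ∈ 𝕄.M) :
    Definable₁ 𝕄 fun p => B p s :=
  h.comp (t := fun | 0 => fun v => v 0 | n + 1 => fun _ => s n)
    fun | 0 => .var 0 | n + 1 => .const (hs n)

namespace IsGeneric

variable {G : Set ZFSet.{u}}

lemma nameEval_mem_iff_exists_forcesStar (hG : IsGeneric 𝕄 F.P F.le G)
    (hEq : Definable₃ 𝕄 (forcesEq (F.leOn F.P))) {i j : ℕ} (hi : s i ∈ 𝕄.M) (hj : s j ∈ 𝕄.M) :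
    nameEval G (s i) ∈ nameEval G (s j) ↔ ∃ p ∈ G, ForcesStar F (.mem i j) p s := by
  have hmono (p q ρ) (hqp : F.leOn F.P q p) :
      forcesEq (F.leOn F.P) p (s i) ρ → forcesEq (F.leOn F.P) q (s i) ρ :=
    forcesEq_mono F.isForcingOrder hqp
  have hdef := Definable₃.comp (hEq.memClause F.isForcingOrder) (.var 0) (.const hi) (.const hj)
  refine (hG.nameEval_mem_iff hmono fun ρ b hρ => hG.nameEval_eq_iff hEq hi ?_).trans
    (hG.exists_denseBelow_iff hdef fun p q hqp h =>
      h.mono F.isForcingOrder (hmono p q · hqp) hqp).symm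
  exact (GBModel.mem_of_opair_mem (𝕄.transitive _ hj _ hρ)).1

lemma exists_forcesStar_not_iff (hG : IsGeneric 𝕄 F.P F.le G)
    (hdef : Definable₁ 𝕄 fun p => ForcesStar F φ p s) :
    (∃ p ∈ G, ForcesStar F (.not φ) p s) ↔ ¬ ∃ p ∈ G, ForcesStar F φ p s := by
  refine ⟨fun ⟨p, hp, hnot⟩ ⟨q, hq, h⟩ => ?_, (hG.exists_mem_or_forall_le_not hdef).resolve_left⟩
  obtain ⟨r, -, hrp, hrq⟩ := hG.exists_common_le hp hq
  exact hnot r hrp (h.mono hrq)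

lemma exists_forcesStar_or_iff {ψ : EFormula} (hG : IsGeneric 𝕄 F.P F.le G)
    (hφ : Definable₁ 𝕄 fun p => ForcesStar F φ p s)
    (hψ : Definable₁ 𝕄 fun p => ForcesStar F ψ p s) :
    (∃ p ∈ G, ForcesStar F (.or φ ψ) p s) ↔
      (∃ p ∈ G, ForcesStar F φ p s) ∨ ∃ p ∈ G, ForcesStar F ψ p s := by
  refine (hG.exists_denseBelow_iff (hφ.or hψ) fun p q hqp =>
    Or.imp (.mono hqp) (.mono hqp)).trans ?_
  simp only [and_or_left, exists_or]

lemma exists_forcesStar_ex_iff {i : ℕ} (hG : IsGeneric 𝕄 F.P F.le G)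
    (hdef : Definable₁ 𝕄 fun p => ∃ σ ∈ F.names, ForcesStar F φ p (Function.update s i σ)) :
    (∃ p ∈ G, ForcesStar F (.ex i φ) p s) ↔
      ∃ σ ∈ F.names, ∃ p ∈ G, ForcesStar F φ p (Function.update s i σ) := by
  refine (hG.exists_denseBelow_iff hdef fun p q hqp ⟨σ, hσ, h⟩ => ⟨σ, hσ, h.mono hqp⟩).trans ?_
  exact ⟨fun ⟨p, hp, σ, hσ, h⟩ => ⟨σ, hσ, p, hp, h⟩, fun ⟨σ, hσ, p, hp, h⟩ => ⟨p, hp, σ, hσ, h⟩⟩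

theorem sat_iff_exists_forcesStar (hG : IsGeneric 𝕄 F.P F.le G)
    (hEq : Definable₃ 𝕄 (forcesEq (F.leOn F.P))) (hs : ∀ n, s n ∈ F.names) :
    φ.Sat (MGen 𝕄 F.P G) (fun n => nameEval G (s n)) ↔ ∃ p ∈ G, ForcesStar F φ p s := by
  have hdef {s : ℕ → ZFSet.{u}} (hs : ∀ n, s n ∈ F.names) (φ : EFormula) :
      Definable₁ 𝕄 fun p => ForcesStar F φ p s :=
    (definable_forcesStar hEq φ).comp_const fun n => (hs n).1
  induction φ generalizing s with
  | mem i j => exact hG.nameEval_mem_iff_exists_forcesStar hEq (hs i).1 (hs j).1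
  | eq i j => exact hG.nameEval_eq_iff hEq (hs i).1 (hs j).1
  | not φ ih =>
    exact (not_congr (ih hs)).trans (hG.exists_forcesStar_not_iff (hdef hs φ)).symm
  | or φ ψ ihφ ihψ =>
    exact (or_congr (ihφ hs) (ihψ hs)).trans
      (hG.exists_forcesStar_or_iff (hdef hs φ) (hdef hs ψ)).symm
  | ex i φ ih =>
    have hwitness {σ} (hσ : σ ∈ F.names) :
        φ.Sat (MGen 𝕄 F.P G) (Function.update (fun n => nameEval G (s n)) i (nameEval G σ)) ↔
          ∃ p ∈ G, ForcesStar F φ p (Function.update s i σ) := by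
      rw [← nameEval_update]
      exact ih (update_mem hs hσ i)
    refine .trans ?_ <| .symm <| hG.exists_forcesStar_ex_iff <|
      (definable_exists_forcesStar_update (definable_forcesStar hEq φ) i).comp_const
        (B := fun p s => ∃ σ ∈ F.names, ForcesStar F φ p (Function.update s i σ))
        fun n => (hs n).1
    constructor
    · rintro ⟨_, ⟨σ, hσM, hσ, rfl⟩, h⟩
      exact ⟨σ, ⟨hσM, hσ⟩, (hwitness ⟨hσM, hσ⟩).1 h⟩
    · rintro ⟨σ, hσ, h⟩
      exact ⟨nameEval G σ, ⟨σ, hσ.1, hσ.2, rfl⟩, (hwitness hσ).2 h⟩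

end IsGeneric

end ForcesStar

/-! ### Tuples of names -/

/-- The `n`-th entry of a coded list, or `∅` beyond its end. -/
def decode (l : ZFSet.{u}) (n : ℕ) : ZFSet.{u} := fstZ (sndZ^[n] l)

section Tuples

variable {L : List ZFSet.{u}}

lemma DefinableTerm.decode {t : (ℕ → ZFSet.{u}) → ZFSet.{u}} (ht : DefinableTerm 𝕄 t) (n : ℕ) :
    DefinableTerm 𝕄 fun v => decode (t v) n := by
  induction n generalizing t with
  | zero => exact ht.fst
  | succ _ ih => exact ih ht.snd

lemma decode_empty (n : ℕ) : decode (∅ : ZFSet.{u}) n = ∅ := by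
  have hnot : ¬ ∃ a b : ZFSet.{u}, ∅ = a.pair b := fun ⟨a, b, h⟩ =>
    ZFSet.notMem_empty {a} (h ▸ ZFSet.mem_pair.2 (.inl rfl))
  rw [decode, Function.iterate_fixed (sndZ_of_not_pair hnot), fstZ_of_not_pair hnot]

lemma decode_listEncode (L : List ZFSet.{u}) (n : ℕ) : decode (listEncode L) n = L.getD n ∅ := by
  induction L generalizing n with
  | nil => exact decode_empty n
  | cons a L ih =>
    cases n with
    | zero => exact fstZ_pair a _
    | succ n =>
      rw [List.getD_cons_succ, ← ih, decode, Function.iterate_succ_apply, listEncode, sndZ_pair]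
      rfl

lemma listEncode_mem_M (hL : ∀ a ∈ L, a ∈ 𝕄.M) : listEncode L ∈ 𝕄.M := by
  induction L with
  | nil => exact 𝕄.empty_mem
  | cons a L ih =>
    exact GBModel.opair_mem (hL a List.mem_cons_self) (ih fun b hb => hL b (.tail a hb))

/-- The class of codes of `m`-tuples of elements of `C`. -/
def IsTuple (C : Set ZFSet.{u}) (m : ℕ) (l : ZFSet.{u}) : Prop :=
  ∃ σs : Fin m → ZFSet.{u}, (∀ i, σs i ∈ C) ∧ l = listEncode (List.ofFn σs)

lemma isTuple_succ_iff {C : Set ZFSet.{u}} {m : ℕ} {l : ZFSet.{u}} :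
    IsTuple C (m + 1) l ↔ ∃ a ∈ C, ∃ l', l = a.pair l' ∧ IsTuple C m l' := by
  simp only [IsTuple, Fin.exists_fin_succ_pi, Fin.forall_fin_succ, List.ofFn_succ, Fin.cons_zero,
    Fin.cons_succ, listEncode]
  constructor
  · rintro ⟨a, σs, ⟨ha, hσs⟩, rfl⟩
    exact ⟨a, ha, _, rfl, σs, hσs, rfl⟩
  · rintro ⟨a, ha, _, rfl, σs, hσs, rfl⟩
    exact ⟨a, σs, ⟨ha, hσs⟩, rfl⟩

lemma definable_isTuple {C : Set ZFSet.{u}} (hC : C ∈ 𝕄.Cls) (m : ℕ) :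
    Definable₁ 𝕄 (IsTuple C m) := by
  induction m with
  | zero =>
    refine (Definable.eq_term (.var 0) (.const 𝕄.empty_mem)).congr fun v _ => ?_
    simp [IsTuple, listEncode]
  | succ m ih =>
    have hpair : Definable₁ 𝕄 fun l => ∃ a ∈ C, ∃ l' ∈ 𝕄.M, l = a.pair l' ∧ IsTuple C m l' :=
      .exists_mem_cls hC <| .ex <|
        .and (.eq_term (.var 2) (.pair (.var 1) (.var 0))) (Definable₁.comp ih (.var 0))
    refine hpair.congr fun v hv => ?_
    rw [isTuple_succ_iff]
    refine exists_congr fun a => and_congr_right fun _ => exists_congr fun l' => ?_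
    exact and_iff_right_of_imp fun h => (GBModel.mem_of_opair_mem (h.1 ▸ hv 0)).2

end Tuples

/-! ### The forcing theorem -/

section ForcingTheorem

variable {F : ClassForcing.{u} 𝕄} {φ : EFormula} {p : ZFSet.{u}} {m : ℕ} {σs : Fin m → ZFSet.{u}}

lemma decode_listEncode_mem_names (hσs : ∀ i, σs i ∈ F.names) (n : ℕ) :
    decode (listEncode (List.ofFn σs)) n ∈ F.names := by
  rw [decode_listEncode]
  by_cases hn : n < m
  · simpa [hn] using hσs ⟨n, hn⟩
  · simpa [hn] using ⟨𝕄.empty_mem, isName_empty⟩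

lemma namesAssign_eq (G : Set ZFSet.{u}) :
    namesAssign G m σs = fun n => nameEval G (decode (listEncode (List.ofFn σs)) n) := by
  funext n
  rw [decode_listEncode, namesAssign]
  by_cases hn : n < m <;> simp [hn, nameEval_empty]

lemma IsGeneric.sat_namesAssign_iff {G : Set ZFSet.{u}} (hG : IsGeneric 𝕄 F.P F.le G)
    (hEq : Definable₃ 𝕄 (forcesEq (F.leOn F.P))) (hσs : ∀ i, σs i ∈ F.names) :
    φ.Sat (MGen 𝕄 F.P G) (namesAssign G m σs) ↔
      ∃ p ∈ G, ForcesStar F φ p (decode (listEncode (List.ofFn σs))) := by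
  rw [namesAssign_eq]
  exact hG.sat_iff_exists_forcesStar hEq (decode_listEncode_mem_names hσs)

lemma forces_iff_forcesStar (hEq : Definable₃ 𝕄 (forcesEq (F.leOn F.P)))
    (hσs : ∀ i, σs i ∈ F.names) :
    Forces 𝕄 F φ m p σs ↔ ForcesStar F φ p (decode (listEncode (List.ofFn σs))) := by
  refine ⟨fun h => .of_dense fun q hqp => ?_, fun h G hG hpG =>
    (hG.sat_namesAssign_iff hEq hσs).2 ⟨p, hpG, h⟩⟩
  obtain ⟨G, hG, hqG⟩ := F.exists_isGeneric hqp.1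
  obtain ⟨r, hr, hφ⟩ := (hG.sat_namesAssign_iff hEq hσs).1 (h G hG (hG.mem_of_le hqG hqp))
  obtain ⟨t, -, htq, htr⟩ := hG.exists_common_le hqG hr
  exact ⟨t, htq, hφ.mono htr⟩

lemma forcingRelation_mem_Cls (hEq : Definable₃ 𝕄 (forcesEq (F.leOn F.P))) (φ : EFormula) (m : ℕ) :
    {x : ZFSet.{u} | ∃ p ∈ F.P, ∃ σs : Fin m → ZFSet.{u}, (∀ i, σs i ∈ F.names) ∧
      Forces 𝕄 F φ m p σs ∧ x = p.pair (listEncode (List.ofFn σs))} ∈ 𝕄.Cls := by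
  have hstar : Definable₂ 𝕄 fun p l => ForcesStar F φ p (decode l) :=
    (definable_forcesStar hEq φ).comp
      (t := fun | 0 => fun v => v 0 | n + 1 => fun v => decode (v 1) n)
      fun | 0 => .var 0 | n + 1 => (DefinableTerm.var 1).decode n
  have hcodes : Definable₁ 𝕄 fun x => ∃ p ∈ F.P, ∃ l ∈ 𝕄.M,
      x = p.pair l ∧ IsTuple F.names m l ∧ ForcesStar F φ p (decode l) :=
    .exists_mem_cls F.P_cls <| .ex <| .and (.eq_term (.var 2) (.pair (.var 1) (.var 0))) <|
      .and (Definable₁.comp (definable_isTuple F.names_mem_Cls m) (.var 0))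
        (Definable₂.comp hstar (.var 1) (.var 0))
  convert hcodes.setOf_mem_Cls using 1
  ext x
  constructor
  · rintro ⟨p, hp, σs, hσs, h, rfl⟩
    have hl : listEncode (List.ofFn σs) ∈ 𝕄.M :=
      listEncode_mem_M (List.forall_mem_ofFn_iff.2 fun i => (hσs i).1)
    exact ⟨GBModel.opair_mem (𝕄.classes_sub _ F.P_cls hp) hl, p, hp, _, hl, rfl, ⟨σs, hσs, rfl⟩,
      (forces_iff_forcesStar hEq hσs).1 h⟩
  · rintro ⟨-, p, hp, _, -, rfl, ⟨σs, hσs, rfl⟩, h⟩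
    exact ⟨p, hp, σs, hσs, (forces_iff_forcesStar hEq hσs).2 h, rfl⟩

theorem satisfiesForcingTheorem_of_definable_forcesEq
    (hEq : Definable₃ 𝕄 (forcesEq (F.leOn F.P))) : SatisfiesForcingTheorem 𝕄 F := by
  refine fun φ m _ => ⟨forcingRelation_mem_Cls hEq φ m, fun σs hσs G hG hsat => ?_⟩
  obtain ⟨p, hp, h⟩ := (hG.sat_namesAssign_iff hEq hσs).1 hsat
  exact ⟨p, hp, (forces_iff_forcesStar hEq hσs).2 h⟩

end ForcingTheorem

/-- If `ℙ` is a notion of class forcing for `𝕄 ⊨ GB⁻` that is approachable by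
projections, then `ℙ` satisfies the forcing theorem over `𝕄`. -/
theorem approachable_implies_forcing_theorem
    (𝕄 : GBModel) (F : ClassForcing 𝕄) (h : ApproachableByProjections 𝕄 F) :
    SatisfiesForcingTheorem 𝕄 F :=
  satisfiesForcingTheorem_of_definable_forcesEq (definable_forcesEq_of_approachable h)

end CF
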